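/- (Achievability of the strong converse exponent for α ∈ (0,1).) Let α ∈ (0,1). For any discrete memoryless channel W: X → Y on finite alphabets and any r ≥ 0, the strong converse exponent satisfies E_sc^{(α)}(W,r) ≤ max_{α≤β≤1} [α(1−β)/(β(1−α))](I_β(W) − r). -/

import Mathlib

open scoped ENNReal NNReal BigOperators Classical
open Filter

noncomputable section

namespace RST

/-- Base-2 logarithm `ℝ≥0∞ → EReal`, with `log 0 = ⊥` and `log ⊤ = ⊤`. -/
def elog2 (s : ℝ≥0∞) : EReal :=
  if s = 0 then ⊥ else if s = ⊤ then ⊤ else ((Real.logb 2 s.toReal : ℝ) : EReal)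

/-- Base-2 logarithm `EReal → EReal` (for nonnegative arguments). -/
def eLog2 (x : EReal) : EReal :=
  if x = ⊤ then ⊤ else if x ≤ 0 then ⊥ else ((Real.logb 2 x.toReal : ℝ) : EReal)

/-- Base-2 exponential `EReal → ℝ≥0∞`. -/
def epow2 (x : EReal) : ℝ≥0∞ :=
  if x = ⊤ then ⊤ else if x = ⊥ then 0 else ENNReal.ofReal ((2 : ℝ) ^ x.toReal)

variable {X Y : Type*}

/-- A probability distribution on a finite alphabet, as an `ℝ≥0∞`-valued function. -/
def IsDist [Fintype X] (P : X → ℝ≥0∞) : Prop := ∑ x, P x = 1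

/-- A discrete memoryless channel: every row is a probability distribution. -/
def IsChannel [Fintype X] [Fintype Y] (W : X → Y → ℝ≥0∞) : Prop := ∀ x, ∑ y, W x y = 1

/-- Order-`α` Rényi divergence (base 2), with the order `α ∈ [0,∞]` encoded as `ℝ≥0∞`.
The conventions `0/0 = 0` and `a/0 = ∞` (for `a > 0`, `α > 1`) are built into `ℝ≥0∞`
arithmetic.  The second argument is allowed to be an arbitrary nonnegative vector. -/
def renyiD [Fintype X] (α : ℝ≥0∞) (P Q : X → ℝ≥0∞) : EReal :=
  if α = 0 then - elog2 (∑ x ∈ Finset.univ.filter fun x => P x ≠ 0, Q x)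
  else if α = 1 then ∑ x, ((P x).toReal : EReal) * elog2 (P x / Q x)
  else if α = ⊤ then elog2 (⨆ x, P x / Q x)
  else (((α.toReal - 1)⁻¹ : ℝ) : EReal) *
    elog2 (∑ x, P x ^ α.toReal * Q x ^ (1 - α.toReal))

/-- The `X`-marginal of a joint distribution on `X × Y`. -/
def margX [Fintype X] [Fintype Y] (P : X × Y → ℝ≥0∞) : X → ℝ≥0∞ := fun x => ∑ y, P (x, y)

/-- Order-`α` Rényi mutual information `I_α(X:Y)_P = min_{Q_Y} D_α(P‖P_X × Q_Y)`. -/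
def renyiMI [Fintype X] [Fintype Y] (α : ℝ≥0∞) (P : X × Y → ℝ≥0∞) : EReal :=
  ⨅ Q : {Q : Y → ℝ≥0∞ // IsDist Q}, renyiD α P fun p => margX P p.1 * Q.1 p.2

/-- The joint input-output distribution `P_X · W`. -/
def joint [Fintype X] [Fintype Y] (PX : X → ℝ≥0∞) (W : X → Y → ℝ≥0∞) : X × Y → ℝ≥0∞ :=
  fun p => PX p.1 * W p.1 p.2

/-- Order-`α` Rényi capacity `I_α(W) = max_{P_X} I_α(X:Y)_{P_X · W}`. -/
def renyiCap [Fintype X] [Fintype Y] (α : ℝ≥0∞) (W : X → Y → ℝ≥0∞) : EReal :=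
  ⨆ P : {P : X → ℝ≥0∞ // IsDist P}, renyiMI α (joint P.1 W)

/-- `N` is a simulation of a channel `X → Y` with communication cost at most `c` bits:
shared randomness `K = Fin m` with distribution `PK`, a message set `{1,…,M}` with
`log₂ M ≤ c`, an encoder `E` and a decoder `D`. -/
def IsSimulation [Fintype X] [Fintype Y] (c : ℝ) (N : X → Y → ℝ≥0∞) : Prop :=
  ∃ (m M : ℕ) (PK : Fin m → ℝ≥0∞) (E : X → Fin m → Fin M → ℝ≥0∞)
    (D : Fin M → Fin m → Y → ℝ≥0∞),
    0 < M ∧ Real.logb 2 M ≤ c ∧ (∑ k, PK k = 1) ∧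
    (∀ x k, ∑ j, E x k j = 1) ∧ (∀ j k, ∑ y, D j k y = 1) ∧
    ∀ x y, N x y = ∑ k, ∑ j, PK k * E x k j * D j k y

/-- `D_α(W, N) := max_x D_α(W(·|x) ‖ N(·|x))`. -/
def chD [Fintype X] [Fintype Y] (α : ℝ≥0∞) (W N : X → Y → ℝ≥0∞) : EReal :=
  ⨆ x, renyiD α (W x) (N x)

/-- `𝖣_α(W, c) := min_{N ∈ A(W,c)} D_α(W, N)`. -/
def simD [Fintype X] [Fintype Y] (α : ℝ≥0∞) (W : X → Y → ℝ≥0∞) (c : ℝ) : EReal :=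
  ⨅ N : {N : X → Y → ℝ≥0∞ // IsSimulation c N}, chD α W N.1

/-- The `n`-fold memoryless extension `W^{×n}` of a channel `W`. -/
def prodCh [Fintype X] [Fintype Y] (n : ℕ) (W : X → Y → ℝ≥0∞) :
    (Fin n → X) → (Fin n → Y) → ℝ≥0∞ :=
  fun xs ys => ∏ i, W (xs i) (ys i)

/-- A sequence of communication costs with rate at most `r`. -/
def RateOK (r : ℝ) (c : ℕ → ℝ) : Prop :=
  (∀ n, 0 ≤ c n) ∧ Filter.limsup (fun n : ℕ => ((c n / n : ℝ) : EReal)) Filter.atTop ≤ (r : EReal)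

/-- Reliability function `E_rf^{(α)}(W, r)`. -/
def Erf [Fintype X] [Fintype Y] (α : ℝ≥0∞) (W : X → Y → ℝ≥0∞) (r : ℝ) : EReal :=
  ⨆ c : {c : ℕ → ℝ // RateOK r c},
    Filter.liminf
      (fun n : ℕ => (((-1 : ℝ) / n : ℝ) : EReal) * eLog2 (simD α (prodCh n W) (c.1 n)))
      Filter.atTop

/-- Strong converse exponent `E_sc^{(α)}(W, r)`. -/
def Esc [Fintype X] [Fintype Y] (α : ℝ≥0∞) (W : X → Y → ℝ≥0∞) (r : ℝ) : EReal :=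
  ⨅ c : {c : ℕ → ℝ // RateOK r c},
    Filter.limsup
      (fun n : ℕ => (((1 : ℝ) / n : ℝ) : EReal) * simD α (prodCh n W) (c.1 n))
      Filter.atTop

/-- The `α`-Rényi simulation rate `R_RST^{(α)}(W)`. -/
def Rrst [Fintype X] [Fintype Y] (α : ℝ≥0∞) (W : X → Y → ℝ≥0∞) : EReal :=
  ⨅ c : {c : ℕ → ℝ // (∀ n, 0 ≤ c n) ∧
      Filter.limsup (fun n : ℕ => simD α (prodCh n W) (c n)) Filter.atTop = 0},
    Filter.limsup (fun n : ℕ => ((c.1 n / n : ℝ) : EReal)) Filter.atTop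

/-- n-fold product of a joint distribution on `X × Y`, as a distribution on pairs of
sequences. -/
def prodJoint [Fintype X] [Fintype Y] (n : ℕ) (P : X × Y → ℝ≥0∞) :
    (Fin n → X) × (Fin n → Y) → ℝ≥0∞ :=
  fun p => ∏ i, P (p.1 i, p.2 i)

/-- n-fold product distribution. -/
def prodDist [Fintype X] (n : ℕ) (P : X → ℝ≥0∞) : (Fin n → X) → ℝ≥0∞ :=
  fun xs => ∏ i, P (xs i)

/-- The type (empirical count vector) of a sequence. -/
def seqType [Fintype Y] [DecidableEq Y] {n : ℕ} (ys : Fin n → Y) : Y → ℕ :=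
  fun y => (Finset.univ.filter fun i => ys i = y).card

/-- The cardinality of the type class of a sequence. -/
def typeClassCard [Fintype Y] [DecidableEq Y] {n : ℕ} (ys : Fin n → Y) : ℕ :=
  (Finset.univ.filter fun zs : Fin n → Y => seqType zs = seqType ys).card

/-- The number of types of sequences in `Y^n`. -/
def numTypes (Y : Type*) [Fintype Y] [DecidableEq Y] (n : ℕ) : ℕ :=
  (Finset.univ.image fun ys : Fin n → Y => seqType ys).card

/-- `Φ_{Y^n}`: the uniform mixture over type classes of `Y^n`. -/
def PhiY (Y : Type*) [Fintype Y] [DecidableEq Y] (n : ℕ) : (Fin n → Y) → ℝ≥0∞ :=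
  fun ys => ((numTypes Y n : ℝ≥0∞) * (typeClassCard ys : ℝ≥0∞))⁻¹

end RST

namespace RST

/-!
Let `R` bound the right-hand side. For each order `β`, Sion's minimax theorem yields an output
distribution `q` with `D_β(W_x‖q) ≤ I_β(W)` for every `x`, and tilting the rows `W_x` towards `q`
gives a test channel `V` with `α/(1-α) D(V_x‖W_x) + s (D(V_x‖q) - r) ≤ R`, up to an arbitrarily
small error, where `s = α(1-β)/(β(1-α))` runs over `[0,1]`. A second minimax, over `s` and for a
fixed type `p` of the input, produces a single pair `(V, q)` with
`α/(1-α) D(V‖W|p) + (D(V‖q|p) - r)⁺ ≤ R`.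

Let `Q` be the average of the product distributions `qⁿ` over the polynomially many types. Sending
one of `M ≈ 2^(nr)` shared codewords drawn from `Q`, selected by a likelihood encoder, simulates
`min(Vⁿ, M Q)` up to a factor `2`. The variational bound `D_α(W‖N) ≤ α/(1-α) D(V‖W) + D(V‖N)` then
reduces the error exponent to the mean of `(log (Vⁿ/qⁿ) - nr)⁺`, and the variance of the
information density costs only `O(√n)` because `q` is bounded below.
-/

theorem mul_log_add_sub_le {u v c : ℝ} (hu : 0 ≤ u) (hv : 0 < v) (hc : 0 < c) :
    u * Real.log c + u - c * v ≤ u * Real.log (u / v) := by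
  rcases hu.eq_or_lt with rfl | hu
  · simpa using (mul_pos hc hv).le
  · have htangent := Real.log_le_sub_one_of_pos (x := c * v / u) (by positivity)
    have hlog : Real.log (u / v) = Real.log c - Real.log (c * v / u) := by
      rw [← Real.log_div hc.ne' (by positivity)]
      congr 1
      field_simp
    calc u * Real.log c + u - c * v = u * (Real.log c - (c * v / u - 1)) := by field_simp; ring
      _ ≤ u * Real.log (u / v) := by rw [hlog]; gcongr

theorem convexOn_mul_log_div :
    ConvexOn ℝ (Set.Ici (0 : ℝ) ×ˢ Set.Ioi (0 : ℝ))
      fun p : ℝ × ℝ => p.1 * Real.log (p.1 / p.2) := by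
  refine ⟨(convex_Ici 0).prod (convex_Ioi 0), ?_⟩
  rintro ⟨u₁, v₁⟩ hp₁ ⟨u₂, v₂⟩ hp₂ l m hl hm hlm
  obtain ⟨hU, hV⟩ := ((convex_Ici (0 : ℝ)).prod (convex_Ioi (0 : ℝ))) hp₁ hp₂ hl hm hlm
  simp only [Prod.smul_mk, Prod.mk_add_mk, smul_eq_mul, Set.mem_prod, Set.mem_Ici, Set.mem_Ioi]
    at hp₁ hp₂ hU hV ⊢
  rcases hU.eq_or_lt with hU | hU
  · have h₁ : l * u₁ = 0 := by nlinarith [mul_nonneg hl hp₁.1, mul_nonneg hm hp₂.1]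
    have h₂ : m * u₂ = 0 := by nlinarith [mul_nonneg hl hp₁.1, mul_nonneg hm hp₂.1]
    simp [← mul_assoc, h₁, h₂]
  · set c := (l * u₁ + m * u₂) / (l * v₁ + m * v₂) with hc
    have hc_mul : c * (l * v₁ + m * v₂) = l * u₁ + m * u₂ := div_mul_cancel₀ _ hV.ne'
    have h₁ := mul_le_mul_of_nonneg_left (mul_log_add_sub_le hp₁.1 hp₁.2 (div_pos hU hV)) hl
    have h₂ := mul_le_mul_of_nonneg_left (mul_log_add_sub_le hp₂.1 hp₂.2 (div_pos hU hV)) hm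
    rw [← hc] at h₁ h₂
    linarith

theorem mul_log_div_eq_sub (u : ℝ) {c : ℝ} (hc : c ≠ 0) :
    u * Real.log (u / c) = u * Real.log u - u * Real.log c := by
  rcases eq_or_ne u 0 with rfl | hu
  · simp
  · rw [Real.log_div hu hc, mul_sub]

theorem convexOn_mul_log_div_const (c : ℝ) :
    ConvexOn ℝ (Set.Ici 0) fun u : ℝ => u * Real.log (u / c) := by
  rcases eq_or_ne c 0 with rfl | hc
  · simpa using convexOn_const (0 : ℝ) (convex_Ici (0 : ℝ))
  · simp only [mul_log_div_eq_sub _ hc]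
    exact Real.convexOn_mul_log.sub ((LinearMap.mulRight ℝ (Real.log c)).concaveOn (convex_Ici 0))

theorem continuous_mul_log_div_const (c : ℝ) : Continuous fun u : ℝ => u * Real.log (u / c) := by
  rcases eq_or_ne c 0 with rfl | hc
  · simp [continuous_const]
  · simp only [mul_log_div_eq_sub _ hc]
    exact Real.continuous_mul_log.sub (continuous_id.mul continuous_const)

theorem continuousOn_mul_log_div :
    ContinuousOn (fun p : ℝ × ℝ => p.1 * Real.log (p.1 / p.2)) {p | p.2 ≠ 0} := by
  refine ContinuousOn.congr (f := fun p : ℝ × ℝ => p.1 * Real.log p.1 - p.1 * Real.log p.2) ?_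
    fun p hp => mul_log_div_eq_sub p.1 hp
  exact (Real.continuous_mul_log.comp continuous_fst).continuousOn.sub
    (continuousOn_fst.mul (continuousOn_snd.log fun _ hp => hp))

section FinsetSum

variable {ι 𝕜 E F : Type*} [Semiring 𝕜] [PartialOrder 𝕜] [AddCommMonoid E] [SMul 𝕜 E]
  [AddCommMonoid F] [PartialOrder F] [IsOrderedAddMonoid F] [Module 𝕜 F] {K : Set E}

theorem convexOn_finset_sum (s : Finset ι) {f : ι → E → F} (hK : Convex 𝕜 K)
    (hf : ∀ i ∈ s, ConvexOn 𝕜 K (f i)) : ConvexOn 𝕜 K fun p => ∑ i ∈ s, f i p := by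
  induction s using Finset.induction_on with
  | empty => exact ⟨hK, by simp⟩
  | insert i s hi ih =>
    simp only [Finset.sum_insert hi]
    exact (hf i (Finset.mem_insert_self i s)).add
      (ih fun j hj => hf j (Finset.mem_insert_of_mem hj))

theorem concaveOn_finset_sum (s : Finset ι) {f : ι → E → F} (hK : Convex 𝕜 K)
    (hf : ∀ i ∈ s, ConcaveOn 𝕜 K (f i)) : ConcaveOn 𝕜 K fun p => ∑ i ∈ s, f i p :=
  convexOn_finset_sum (F := Fᵒᵈ) s hK hf

end FinsetSum

/-- Relative entropy `D(p‖q)` in nats of nonnegative vectors, the exponent governing the simulation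
of tilted channels.  A term with `q z = 0` contributes `0` rather than `∞`. -/
def relEntropy {Z : Type*} [Fintype Z] (p q : Z → ℝ) : ℝ := ∑ z, p z * Real.log (p z / q z)

section RelEntropy

variable {Z : Type*} [Fintype Z]

theorem convexOn_relEntropy :
    ConvexOn ℝ (Set.Ici (0 : Z → ℝ) ×ˢ Set.univ.pi fun _ => Set.Ioi (0 : ℝ))
      fun p => relEntropy p.1 p.2 := by
  have hconv : Convex ℝ (Set.Ici (0 : Z → ℝ) ×ˢ Set.univ.pi fun _ : Z => Set.Ioi (0 : ℝ)) :=
    (convex_Ici 0).prod (convex_pi fun _ _ => convex_Ioi 0)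
  refine convexOn_finset_sum _ hconv fun z _ => ?_
  exact (convexOn_mul_log_div.comp_linearMap
    ((LinearMap.proj (R := ℝ) (φ := fun _ : Z => ℝ) z).prodMap (LinearMap.proj z))).subset
      (fun _ hp => ⟨hp.1 z, hp.2 z trivial⟩) hconv

theorem convexOn_relEntropy_left (q : Z → ℝ) :
    ConvexOn ℝ (Set.Ici 0) fun p : Z → ℝ => relEntropy p q := by
  refine convexOn_finset_sum _ (convex_Ici 0) fun z _ => ?_
  exact ((convexOn_mul_log_div_const (q z)).comp_linearMap
    (LinearMap.proj (R := ℝ) (φ := fun _ : Z => ℝ) z)).subset (fun _ hp => hp z) (convex_Ici 0)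

theorem continuous_relEntropy_left (q : Z → ℝ) : Continuous fun p : Z → ℝ => relEntropy p q :=
  continuous_finsetSum _ fun z _ => (continuous_mul_log_div_const (q z)).comp (continuous_apply z)

theorem continuousOn_relEntropy :
    ContinuousOn (fun p : (Z → ℝ) × (Z → ℝ) => relEntropy p.1 p.2) {p | ∀ z, p.2 z ≠ 0} :=
  continuousOn_finsetSum _ fun z _ => continuousOn_mul_log_div.comp
    (f := fun p : (Z → ℝ) × (Z → ℝ) => (p.1 z, p.2 z)) (by fun_prop) fun _ hp => hp z

theorem relEntropy_self (p : Z → ℝ) : relEntropy p p = 0 :=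
  Finset.sum_eq_zero fun z _ => by
    rcases eq_or_ne (p z) 0 with h | h
    · simp [h]
    · simp [div_self h]

end RelEntropy

theorem exists_add_max_zero_le {E : Type*} [TopologicalSpace E] [AddCommGroup E] [Module ℝ E]
    [IsTopologicalAddGroup E] [ContinuousSMul ℝ E] {K : Set E} (hK : IsCompact K) {f g : E → ℝ}
    (hf : ConvexOn ℝ K f) (hg : ConvexOn ℝ K g) (hfc : ContinuousOn f K) (hgc : ContinuousOn g K)
    {c : ℝ} (h : ∀ s ∈ Set.Icc (0 : ℝ) 1, ∃ k ∈ K, f k + s * g k ≤ c) :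
    ∃ k ∈ K, f k + max 0 (g k) ≤ c := by
  obtain ⟨k₀, hk₀, -⟩ := h 0 (by simp)
  obtain ⟨k, hk, s, hs, hsaddle⟩ := Sion.exists_isSaddlePointOn (f := fun k s => f k + s * g k)
    ⟨k₀, hk₀⟩ hf.1 hK
    (fun s _ => (hfc.add (continuousOn_const.mul hgc)).lowerSemicontinuousOn)
    (fun s hs => (hf.add (hg.smul hs.1)).quasiconvexOn)
    (convex_Icc 0 1) ⟨0, by simp⟩ isCompact_Icc
    (fun k _ => (by fun_prop : Continuous fun s : ℝ => f k + s * g k)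
      |>.upperSemicontinuous.upperSemicontinuousOn _)
    (fun k _ => ((concaveOn_const (f k) (convex_Icc 0 1)).add
      ((LinearMap.mulRight ℝ (g k)).concaveOn (convex_Icc 0 1))).quasiconcaveOn)
  obtain ⟨k', hk', hle⟩ := h s hs
  have hend : ∀ t ∈ Set.Icc (0 : ℝ) 1, f k + t * g k ≤ c := fun t ht =>
    (hsaddle k' hk' t ht).trans hle
  refine ⟨k, hk, ?_⟩
  rcases max_cases 0 (g k) with ⟨hmax, -⟩ | ⟨hmax, -⟩
  · simpa [hmax] using hend 0 (by simp)
  · simpa [hmax] using hend 1 (by simp)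

/-- The order-`β` Rényi affinity `∑ z, p(z)^β q(z)^(1-β) = 2^((β-1) D_β(p‖q))` of nonnegative
vectors, the form in which Rényi divergences are computed here. -/
def renyiAffinity {Z : Type*} [Fintype Z] (β : ℝ) (p q : Z → ℝ) : ℝ :=
  ∑ z, p z ^ β * q z ^ (1 - β)

section RenyiAffinity

variable {Z : Type*} [Fintype Z] {β : ℝ}

theorem continuous_renyiAffinity_right (hβ : β ≤ 1) (p : Z → ℝ) :
    Continuous (renyiAffinity β p) :=
  continuous_finsetSum _ fun z _ => continuous_const.mul
    ((continuous_apply z).rpow_const fun _ => Or.inr (sub_nonneg.2 hβ))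

theorem concaveOn_renyiAffinity_right (hβ0 : 0 ≤ β) (hβ1 : β ≤ 1) {p : Z → ℝ} (hp : 0 ≤ p) :
    ConcaveOn ℝ (Set.Ici 0) (renyiAffinity β p) := by
  refine concaveOn_finset_sum _ (convex_Ici 0) fun z _ => ?_
  exact (((Real.concaveOn_rpow (sub_nonneg.2 hβ1) (sub_le_self 1 hβ0)).smul
    (Real.rpow_nonneg (hp z) β)).comp_linearMap
      (LinearMap.proj (R := ℝ) (φ := fun _ : Z => ℝ) z)).subset (fun _ hq => hq z) (convex_Ici 0)

theorem renyiAffinity_mono_right (hβ : β ≤ 1) {p q q' : Z → ℝ} (hp : 0 ≤ p) (hq : 0 ≤ q)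
    (h : q ≤ q') : renyiAffinity β p q ≤ renyiAffinity β p q' :=
  Finset.sum_le_sum fun z _ => mul_le_mul_of_nonneg_left
    (Real.rpow_le_rpow (hq z) (h z) (sub_nonneg.2 hβ)) (Real.rpow_nonneg (hp z) _)

theorem renyiAffinity_smul_right {c : ℝ} (hc : 0 ≤ c) {p q : Z → ℝ} (hq : 0 ≤ q) :
    renyiAffinity β p (c • q) = c ^ (1 - β) * renyiAffinity β p q := by
  simp only [renyiAffinity, Finset.mul_sum, Pi.smul_apply, smul_eq_mul]
  refine Finset.sum_congr rfl fun z _ => ?_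
  rw [Real.mul_rpow hc (hq z)]
  ring

theorem renyiAffinity_pos {p q : Z → ℝ} (hp : 0 ≤ p) (hq : 0 ≤ q)
    (h : ∃ z, 0 < p z ∧ 0 < q z) : 0 < renyiAffinity β p q := by
  obtain ⟨z, hpz, hqz⟩ := h
  exact Finset.sum_pos'
    (fun z _ => mul_nonneg (Real.rpow_nonneg (hp z) _) (Real.rpow_nonneg (hq z) _))
    ⟨z, Finset.mem_univ z, by positivity⟩

end RenyiAffinity

theorem elog2_mono : Monotone elog2 := by
  intro s t h
  rcases eq_or_ne s 0 with rfl | hs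
  · simp [elog2]
  rcases eq_or_ne t ⊤ with rfl | ht
  · simp [elog2]
  have hs' : s ≠ ⊤ := ne_top_of_le_ne_top ht h
  have ht' : t ≠ 0 := (hs.bot_lt.trans_le h).ne'
  simp only [elog2, hs, ht, hs', ht', if_false, EReal.coe_le_coe_iff]
  exact Real.logb_le_logb_of_le one_lt_two (ENNReal.toReal_pos hs hs') (ENNReal.toReal_mono ht h)

theorem elog2_ofReal {x : ℝ} (hx : 0 < x) : elog2 (ENNReal.ofReal x) = (Real.logb 2 x : ℝ) := by
  simp [elog2, hx, ENNReal.toReal_ofReal hx.le]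

section RenyiDivergence

variable {Z : Type*} [Fintype Z] {β : ℝ}

theorem renyiD_ofReal_order (hβ0 : 0 < β) (hβ1 : β < 1) (P Q : Z → ℝ≥0∞) :
    renyiD (ENNReal.ofReal β) P Q =
      (((β - 1)⁻¹ : ℝ) : EReal) * elog2 (∑ z, P z ^ β * Q z ^ (1 - β)) := by
  simp [renyiD, hβ0, hβ1.ne, ENNReal.toReal_ofReal hβ0.le]

theorem sum_ofReal_rpow_mul_ofReal_rpow (hβ0 : 0 ≤ β) (hβ1 : β ≤ 1) {p q : Z → ℝ} (hp : 0 ≤ p)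
    (hq : 0 ≤ q) : ∑ z, ENNReal.ofReal (p z) ^ β * ENNReal.ofReal (q z) ^ (1 - β) =
      ENNReal.ofReal (renyiAffinity β p q) := by
  rw [renyiAffinity, ENNReal.ofReal_sum_of_nonneg fun z _ =>
    mul_nonneg (Real.rpow_nonneg (hp z) _) (Real.rpow_nonneg (hq z) _)]
  refine Finset.sum_congr rfl fun z _ => ?_
  rw [ENNReal.ofReal_mul (Real.rpow_nonneg (hp z) _), ENNReal.ofReal_rpow_of_nonneg (hp z) hβ0,
    ENNReal.ofReal_rpow_of_nonneg (hq z) (sub_nonneg.2 hβ1)]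

theorem inv_mul_elog2_antitone (hβ : β < 1) :
    Antitone fun s => (((β - 1)⁻¹ : ℝ) : EReal) * elog2 s := by
  intro s t h
  simp only [mul_comm (((β - 1)⁻¹ : ℝ) : EReal)]
  refine EReal.mul_le_mul_of_nonpos_right (elog2_mono h) ?_
  exact_mod_cast inv_nonpos.2 (sub_nonpos.2 hβ.le)

theorem le_renyiD_ofReal (hβ0 : 0 < β) (hβ1 : β < 1) {p q : Z → ℝ} (hp : 0 ≤ p) (hq : 0 ≤ q)
    {F : ℝ} (hF : 0 < F) (h : renyiAffinity β p q ≤ F) :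
    (((β - 1)⁻¹ * Real.logb 2 F : ℝ) : EReal) ≤ renyiD (ENNReal.ofReal β)
      (fun z => ENNReal.ofReal (p z)) (fun z => ENNReal.ofReal (q z)) := by
  rw [renyiD_ofReal_order hβ0 hβ1, sum_ofReal_rpow_mul_ofReal_rpow hβ0.le hβ1.le hp hq,
    EReal.coe_mul, ← elog2_ofReal hF]
  exact inv_mul_elog2_antitone hβ1 (ENNReal.ofReal_le_ofReal h)

theorem renyiD_ofReal_le (hβ0 : 0 < β) (hβ1 : β < 1) {p q : Z → ℝ} (hp : 0 ≤ p) (hq : 0 ≤ q)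
    {F : ℝ} (hF : 0 < F) (h : F ≤ renyiAffinity β p q) {N : Z → ℝ≥0∞}
    (hN : ∀ z, ENNReal.ofReal (q z) ≤ N z) :
    renyiD (ENNReal.ofReal β) (fun z => ENNReal.ofReal (p z)) N ≤
      (((β - 1)⁻¹ * Real.logb 2 F : ℝ) : EReal) := by
  rw [renyiD_ofReal_order hβ0 hβ1, EReal.coe_mul, ← elog2_ofReal hF]
  refine inv_mul_elog2_antitone hβ1 ((ENNReal.ofReal_le_ofReal h).trans ?_)
  rw [← sum_ofReal_rpow_mul_ofReal_rpow hβ0.le hβ1.le hp hq]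
  gcongr with z
  exact hN z

end RenyiDivergence

section RenyiCapacity

variable {X Y : Type*} [Fintype X] [Fintype Y] {β : ℝ}

theorem isDist_ofReal {p : X → ℝ} (hp : p ∈ stdSimplex ℝ X) :
    IsDist fun x => ENNReal.ofReal (p x) := by
  rw [IsDist, ← ENNReal.ofReal_sum_of_nonneg fun x _ => hp.1 x, hp.2, ENNReal.ofReal_one]

theorem IsDist.exists_eq_ofReal {P : X → ℝ≥0∞} (hP : IsDist P) :
    ∃ p ∈ stdSimplex ℝ X, P = fun x => ENNReal.ofReal (p x) := by
  have hfin : ∀ x, P x ≠ ⊤ := fun x h => by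
    simpa [h] using (Finset.single_le_sum (fun _ _ => zero_le) (Finset.mem_univ x)).trans_eq hP
  refine ⟨fun x => (P x).toReal, ⟨fun _ => ENNReal.toReal_nonneg, ?_⟩, ?_⟩
  · rw [← ENNReal.toReal_sum fun x _ => hfin x, hP, ENNReal.toReal_one]
  · exact funext fun x => (ENNReal.ofReal_toReal (hfin x)).symm

theorem exists_pos_of_mem_stdSimplex {p : X → ℝ} (hp : p ∈ stdSimplex ℝ X) : ∃ x, 0 < p x := by
  by_contra! h
  linarith [hp.2, Finset.sum_nonpos fun x (_ : x ∈ Finset.univ) => h x]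

theorem uniform_mem_stdSimplex [Nonempty Y] :
    (fun _ => (Fintype.card Y : ℝ)⁻¹) ∈ stdSimplex ℝ Y :=
  ⟨fun _ => by positivity, by simp⟩

theorem margX_joint_ofReal {p : X → ℝ} {w : X → Y → ℝ} (hw : ∀ x, w x ∈ stdSimplex ℝ Y) :
    margX (joint (fun x => ENNReal.ofReal (p x)) fun x y => ENNReal.ofReal (w x y)) =
      fun x => ENNReal.ofReal (p x) := by
  funext x
  simp only [margX, joint]
  rw [← Finset.mul_sum, isDist_ofReal (hw x), mul_one]

theorem joint_ofReal {p : X → ℝ} (hp : 0 ≤ p) (w : X → Y → ℝ) :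
    joint (fun x => ENNReal.ofReal (p x)) (fun x y => ENNReal.ofReal (w x y)) =
      fun z => ENNReal.ofReal (p z.1 * w z.1 z.2) :=
  funext fun z => (ENNReal.ofReal_mul (hp z.1)).symm

theorem renyiAffinity_joint (hβ0 : 0 ≤ β) (hβ1 : β ≤ 1) {p : X → ℝ} (hp : 0 ≤ p) {w : X → Y → ℝ}
    (hw : 0 ≤ w) {q : Y → ℝ} (hq : 0 ≤ q) :
    renyiAffinity β (fun z : X × Y => p z.1 * w z.1 z.2) (fun z => p z.1 * q z.2) =
      ∑ x, p x * renyiAffinity β (w x) q := by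
  simp only [renyiAffinity, Fintype.sum_prod_type, Finset.mul_sum]
  refine Finset.sum_congr rfl fun x _ => Finset.sum_congr rfl fun y _ => ?_
  have hpx : p x ^ β * p x ^ (1 - β) = p x := by
    rw [← Real.rpow_add_of_nonneg (hp x) hβ0 (sub_nonneg.2 hβ1), add_sub_cancel, Real.rpow_one]
  rw [Real.mul_rpow (hp x) (hw x y), Real.mul_rpow (hp x) (hq y)]
  linear_combination w x y ^ β * q y ^ (1 - β) * hpx

theorem le_renyiCap (hβ0 : 0 < β) (hβ1 : β < 1) {w : X → Y → ℝ} (hw : ∀ x, w x ∈ stdSimplex ℝ Y)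
    {p : X → ℝ} (hp : p ∈ stdSimplex ℝ X) {v : ℝ} (hv : 0 < v)
    (h : ∀ q ∈ stdSimplex ℝ Y, ∑ x, p x * renyiAffinity β (w x) q ≤ v) :
    (((β - 1)⁻¹ * Real.logb 2 v : ℝ) : EReal) ≤
      renyiCap (ENNReal.ofReal β) fun x y => ENNReal.ofReal (w x y) := by
  refine le_iSup_of_le ⟨_, isDist_ofReal hp⟩ (le_iInf fun ⟨Q, hQ⟩ => ?_)
  obtain ⟨q, hq, rfl⟩ := hQ.exists_eq_ofReal
  have hmarg : (fun z : X × Y => margX (joint (fun x => ENNReal.ofReal (p x))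
      fun x y => ENNReal.ofReal (w x y)) z.1 * ENNReal.ofReal (q z.2)) =
      fun z => ENNReal.ofReal (p z.1 * q z.2) := by
    simp only [margX_joint_ofReal hw, ENNReal.ofReal_mul (hp.1 _)]
  rw [hmarg, joint_ofReal hp.1]
  refine le_renyiD_ofReal hβ0 hβ1 (fun z => mul_nonneg (hp.1 _) ((hw _).1 _))
    (fun z => mul_nonneg (hp.1 _) (hq.1 _)) hv ?_
  rw [renyiAffinity_joint hβ0.le hβ1.le hp.1 (fun x => (hw x).1) hq.1]
  exact h q hq

theorem exists_saddle_renyiAffinity [Nonempty X] [Nonempty Y] (hβ0 : 0 ≤ β) (hβ1 : β ≤ 1)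
    {w : X → Y → ℝ} (hw : 0 ≤ w) :
    ∃ p ∈ stdSimplex ℝ X, ∃ q ∈ stdSimplex ℝ Y, ∀ q' ∈ stdSimplex ℝ Y, ∀ x,
      ∑ x', p x' * renyiAffinity β (w x') q' ≤ renyiAffinity β (w x) q := by
  have hsimplex : stdSimplex ℝ Y ⊆ Set.Ici 0 := fun q hq => hq.1
  let L : (Y → ℝ) → (X → ℝ) →ₗ[ℝ] ℝ := fun q =>
    ∑ x, (LinearMap.mulRight ℝ (renyiAffinity β (w x) q)).comp (LinearMap.proj x)
  have hL : ∀ p q, L q p = ∑ x, p x * renyiAffinity β (w x) q := fun p q => by simp [L]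
  obtain ⟨p, hp, q, hq, hsaddle⟩ := Sion.exists_isSaddlePointOn (f := fun p q => L q p)
    ⟨_, uniform_mem_stdSimplex⟩ (convex_stdSimplex ℝ X) (isCompact_stdSimplex ℝ X)
    (fun q _ => (L q).continuous_of_finiteDimensional.lowerSemicontinuous.lowerSemicontinuousOn _)
    (fun q _ => ((L q).convexOn (convex_stdSimplex ℝ X)).quasiconvexOn)
    (convex_stdSimplex ℝ Y) ⟨_, uniform_mem_stdSimplex⟩ (isCompact_stdSimplex ℝ Y)
    (fun p _ => by
      simp only [hL]
      exact (continuous_finsetSum _ fun x _ => continuous_const.mul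
        (continuous_renyiAffinity_right hβ1 (w x))).upperSemicontinuous.upperSemicontinuousOn _)
    (fun p hp => by
      simp only [hL]
      exact (concaveOn_finset_sum _ (convex_stdSimplex ℝ Y) fun x _ =>
        ((concaveOn_renyiAffinity_right hβ0 hβ1 (hw x)).smul (hp.1 x)).subset hsimplex
          (convex_stdSimplex ℝ Y)).quasiconcaveOn)
  refine ⟨p, hp, q, hq, fun q' hq' x => ?_⟩
  have hx := hsaddle (Pi.single x 1) (single_mem_stdSimplex ℝ x) q' hq'
  simpa [hL, Pi.single_apply] using hx

theorem exists_le_renyiCap_forall_le_renyiAffinity [Nonempty X] [Nonempty Y] (hβ0 : 0 < β)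
    (hβ1 : β < 1) {w : X → Y → ℝ} (hw : ∀ x, w x ∈ stdSimplex ℝ Y) :
    ∃ κ : ℝ, (κ : EReal) ≤ renyiCap (ENNReal.ofReal β) (fun x y => ENNReal.ofReal (w x y)) ∧
      ∃ q ∈ stdSimplex ℝ Y, ∀ x,
        Real.exp ((β - 1) * (κ * Real.log 2)) ≤ renyiAffinity β (w x) q := by
  obtain ⟨p, hp, q, hq, hsaddle⟩ :=
    exists_saddle_renyiAffinity hβ0.le hβ1.le fun x => (hw x).1
  obtain ⟨x₀, -, hx₀⟩ := Finset.exists_min_image Finset.univ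
    (fun x => renyiAffinity β (w x) q) Finset.univ_nonempty
  have huniform : 0 < ∑ x, p x * renyiAffinity β (w x) fun _ => (Fintype.card Y : ℝ)⁻¹ := by
    have hpos : ∀ x, 0 < renyiAffinity β (w x) fun _ => (Fintype.card Y : ℝ)⁻¹ := fun x =>
      renyiAffinity_pos (hw x).1 uniform_mem_stdSimplex.1
        ((exists_pos_of_mem_stdSimplex (hw x)).imp fun _ h => ⟨h, by positivity⟩)
    obtain ⟨x, hx⟩ := exists_pos_of_mem_stdSimplex hp
    exact Finset.sum_pos' (fun x _ => mul_nonneg (hp.1 x) (hpos x).le)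
      ⟨x, Finset.mem_univ x, mul_pos hx (hpos x)⟩
  have hv : 0 < renyiAffinity β (w x₀) q :=
    huniform.trans_le (hsaddle _ uniform_mem_stdSimplex x₀)
  refine ⟨_, le_renyiCap hβ0 hβ1 hw hp hv fun q' hq' => hsaddle q' hq' x₀, q, hq, fun x => ?_⟩
  have hexp : (β - 1) * ((β - 1)⁻¹ * Real.logb 2 (renyiAffinity β (w x₀) q) * Real.log 2) =
      Real.log (renyiAffinity β (w x₀) q) := by
    rw [Real.logb]
    field_simp [sub_ne_zero.2 hβ1.ne]
  rw [hexp, Real.exp_log hv]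
  exact hx₀ x (Finset.mem_univ x)

end RenyiCapacity

section Tilting

variable {Z : Type*} [Fintype Z]

theorem neg_log_sum_le_relEntropy {v f : Z → ℝ} (hv : v ∈ stdSimplex ℝ Z) (hf : 0 ≤ f)
    (h : ∀ z, v z ≠ 0 → 0 < f z) : -Real.log (∑ z, f z) ≤ relEntropy v f := by
  obtain ⟨z₀, hz₀⟩ := exists_pos_of_mem_stdSimplex hv
  have hsum : 0 < ∑ z, f z :=
    Finset.sum_pos' (fun z _ => hf z) ⟨z₀, Finset.mem_univ z₀, h z₀ hz₀.ne'⟩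
  have hterm : ∀ z, v z * Real.log (∑ z, f z)⁻¹ + v z - (∑ z, f z)⁻¹ * f z ≤
      v z * Real.log (v z / f z) := fun z => by
    rcases eq_or_ne (v z) 0 with hz | hz
    · simpa [hz] using mul_nonneg (inv_pos.2 hsum).le (hf z)
    · exact mul_log_add_sub_le (hv.1 z) (h z hz) (inv_pos.2 hsum)
  have hle := Finset.sum_le_sum fun z (_ : z ∈ Finset.univ) => hterm z
  rw [Finset.sum_sub_distrib, Finset.sum_add_distrib, ← Finset.sum_mul, ← Finset.mul_sum, hv.2,
    inv_mul_cancel₀ hsum.ne', Real.log_inv] at hle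
  simpa [relEntropy] using hle

theorem relEntropy_rpow_mul_rpow (β : ℝ) {v p q : Z → ℝ} (h : ∀ z, v z ≠ 0 → 0 < p z ∧ 0 < q z) :
    relEntropy v (fun z => p z ^ β * q z ^ (1 - β)) =
      β * relEntropy v p + (1 - β) * relEntropy v q := by
  simp only [relEntropy, Finset.mul_sum, ← Finset.sum_add_distrib]
  refine Finset.sum_congr rfl fun z _ => ?_
  rcases eq_or_ne (v z) 0 with hz | hz
  · simp [hz]
  obtain ⟨hp, hq⟩ := h z hz
  rw [Real.log_div hz (by positivity), Real.log_div hz hp.ne', Real.log_div hz hq.ne',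
    Real.log_mul (by positivity) (by positivity), Real.log_rpow hp, Real.log_rpow hq]
  ring

theorem neg_log_renyiAffinity_le {β : ℝ} {v p q : Z → ℝ} (hv : v ∈ stdSimplex ℝ Z) (hp : 0 ≤ p)
    (hq : 0 ≤ q) (h : ∀ z, v z ≠ 0 → 0 < p z ∧ 0 < q z) :
    -Real.log (renyiAffinity β p q) ≤ β * relEntropy v p + (1 - β) * relEntropy v q := by
  rw [← relEntropy_rpow_mul_rpow β h]
  refine neg_log_sum_le_relEntropy hv
    (fun z => mul_nonneg (Real.rpow_nonneg (hp z) _) (Real.rpow_nonneg (hq z) _)) fun z hz => ?_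
  obtain ⟨hpz, hqz⟩ := h z hz
  positivity

theorem renyiD_ofReal_le_relEntropy {β : ℝ} (hβ0 : 0 < β) (hβ1 : β < 1) {v p q : Z → ℝ}
    (hv : v ∈ stdSimplex ℝ Z) (hp : 0 ≤ p) (hq : 0 ≤ q) (h : ∀ z, v z ≠ 0 → 0 < p z ∧ 0 < q z)
    {N : Z → ℝ≥0∞} (hN : ∀ z, ENNReal.ofReal (q z) ≤ N z) :
    renyiD (ENNReal.ofReal β) (fun z => ENNReal.ofReal (p z)) N ≤
      (((β / (1 - β) * relEntropy v p + relEntropy v q) / Real.log 2 : ℝ) : EReal) := by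
  have hpos : 0 < renyiAffinity β p q :=
    renyiAffinity_pos hp hq ((exists_pos_of_mem_stdSimplex hv).imp fun z hz => h z hz.ne')
  refine (renyiD_ofReal_le hβ0 hβ1 hp hq hpos le_rfl hN).trans (EReal.coe_le_coe_iff.2 ?_)
  have hlog := neg_log_renyiAffinity_le (β := β) hv hp hq h
  have hβ : 0 < 1 - β := sub_pos.2 hβ1
  calc (β - 1)⁻¹ * Real.logb 2 (renyiAffinity β p q)
      = -Real.log (renyiAffinity β p q) / (1 - β) / Real.log 2 := by
        rw [← neg_sub 1 β, inv_neg, Real.logb]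
        ring
    _ ≤ (β * relEntropy v p + (1 - β) * relEntropy v q) / (1 - β) / Real.log 2 := by gcongr
    _ = (β / (1 - β) * relEntropy v p + relEntropy v q) / Real.log 2 := by field_simp

/-- The probability vectors absolutely continuous with respect to `p`. -/
def dominatedDists (p : Z → ℝ) : Set (Z → ℝ) := stdSimplex ℝ Z ∩ {z | p z = 0}.pi fun _ => {0}

/-- The probability vectors with all entries at least `δ`.  For `δ > 0` relative entropy to such
vectors is continuous, convex and free of junk values. -/
def distsGE (Z : Type*) [Fintype Z] (δ : ℝ) : Set (Z → ℝ) :=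
  stdSimplex ℝ Z ∩ Set.univ.pi fun _ => Set.Ici δ

theorem convex_dominatedDists (p : Z → ℝ) : Convex ℝ (dominatedDists p) :=
  (convex_stdSimplex ℝ Z).inter (convex_pi fun _ _ => convex_singleton 0)

theorem isCompact_dominatedDists (p : Z → ℝ) : IsCompact (dominatedDists p) :=
  (isCompact_stdSimplex ℝ Z).inter_right (isClosed_set_pi fun _ _ => isClosed_singleton)

theorem convex_distsGE (δ : ℝ) : Convex ℝ (distsGE Z δ) :=
  (convex_stdSimplex ℝ Z).inter (convex_pi fun _ _ => convex_Ici δ)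

theorem isCompact_distsGE (δ : ℝ) : IsCompact (distsGE Z δ) :=
  (isCompact_stdSimplex ℝ Z).inter_right (isClosed_set_pi fun _ _ => isClosed_Ici)

theorem relEntropy_div_sum {g : Z → ℝ} (h : ∑ z, g z ≠ 0) :
    relEntropy (fun z => g z / ∑ z', g z') g = -Real.log (∑ z, g z) := by
  have hterm : ∀ z, g z / (∑ z', g z') * Real.log (g z / (∑ z', g z') / g z) =
      g z / (∑ z', g z') * -Real.log (∑ z', g z') := fun z => by
    rcases eq_or_ne (g z) 0 with hz | hz
    · simp [hz]
    · rw [div_right_comm, div_self hz, one_div, Real.log_inv]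
  simp only [relEntropy, hterm, ← Finset.sum_mul, ← Finset.sum_div, div_self h, one_mul]

theorem exists_relEntropy_eq_neg_log_renyiAffinity {β : ℝ} (hβ : β ≠ 0) {p q : Z → ℝ} (hp : 0 ≤ p)
    (hq : ∀ z, 0 < q z) (h : 0 < renyiAffinity β p q) :
    ∃ v ∈ dominatedDists p,
      β * relEntropy v p + (1 - β) * relEntropy v q = -Real.log (renyiAffinity β p q) := by
  set g : Z → ℝ := fun z => p z ^ β * q z ^ (1 - β) with hg
  have hg0 : ∀ z, 0 ≤ g z := fun z =>
    mul_nonneg (Real.rpow_nonneg (hp z) _) (Real.rpow_nonneg (hq z).le _)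
  have hgp : ∀ z, p z = 0 → g z = 0 := fun z hz => by simp [hg, hz, Real.zero_rpow hβ]
  refine ⟨fun z => g z / ∑ z', g z', ⟨⟨fun z => div_nonneg (hg0 z) h.le, ?_⟩, fun z hz => ?_⟩, ?_⟩
  · rw [← Finset.sum_div]
    exact div_self h.ne'
  · simp [hgp z hz]
  rw [← relEntropy_rpow_mul_rpow β fun z hz =>
    ⟨(hp z).lt_of_ne' fun hz' => hz (by simp [hgp z hz']), hq z⟩]
  exact relEntropy_div_sum h.ne'

end Tilting

section TestChannels

variable {X Y : Type*} [Fintype Y]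

theorem exists_smul_le_of_mem_stdSimplex [Nonempty Y] {q : Y → ℝ} (hq : q ∈ stdSimplex ℝ Y)
    {t : ℝ} (ht0 : 0 ≤ t) (ht1 : t ≤ 1) :
    ∃ Q ∈ distsGE Y ((1 - t) / Fintype.card Y), t • q ≤ Q := by
  refine ⟨t • q + (1 - t) • fun _ => (Fintype.card Y : ℝ)⁻¹, ⟨?_, fun y _ => ?_⟩, ?_⟩
  · exact convex_stdSimplex ℝ Y hq uniform_mem_stdSimplex ht0 (sub_nonneg.2 ht1) (by ring)
  · simpa [div_eq_mul_inv] using mul_nonneg ht0 (hq.1 y)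
  · exact le_add_of_nonneg_right (smul_nonneg (sub_nonneg.2 ht1) uniform_mem_stdSimplex.1)

/-- The pairs of a test channel `V` with rows absolutely continuous with respect to those of `w`
and a reference output distribution bounded below by `δ`. -/
def testPairs (w : X → Y → ℝ) (δ : ℝ) : Set ((X → Y → ℝ) × (Y → ℝ)) :=
  (Set.univ.pi fun x => dominatedDists (w x)) ×ˢ distsGE Y δ

theorem exists_tilted_pair [Fintype X] [Nonempty X] [Nonempty Y] {β : ℝ} (hβ0 : 0 < β) (hβ1 : β < 1)
    {w : X → Y → ℝ} (hw : ∀ x, w x ∈ stdSimplex ℝ Y) {ε : ℝ} (hε : 0 < ε) :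
    ∃ κ : ℝ, (κ : EReal) ≤ renyiCap (ENNReal.ofReal β) (fun x y => ENNReal.ofReal (w x y)) ∧
      ∃ k ∈ testPairs w ((1 - Real.exp (-ε)) / Fintype.card Y), ∀ x,
        β * relEntropy (k.1 x) (w x) + (1 - β) * relEntropy (k.1 x) k.2 ≤
          (1 - β) * (κ * Real.log 2 + ε) := by
  obtain ⟨κ, hκ, q, hq, hqκ⟩ := exists_le_renyiCap_forall_le_renyiAffinity hβ0 hβ1 hw
  have hexp : Real.exp (-ε) < 1 := Real.exp_lt_one_iff.2 (neg_neg_of_pos hε)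
  obtain ⟨Q, hQ, hqQ⟩ := exists_smul_le_of_mem_stdSimplex hq (Real.exp_nonneg (-ε)) hexp.le
  have hQpos : ∀ y, 0 < Q y := fun y =>
    (div_pos (sub_pos.2 hexp) (by positivity)).trans_le (hQ.2 y trivial)
  have haff : ∀ x, Real.exp ((β - 1) * (κ * Real.log 2 + ε)) ≤ renyiAffinity β (w x) Q := fun x =>
    calc Real.exp ((β - 1) * (κ * Real.log 2 + ε))
        = Real.exp (-ε) ^ (1 - β) * Real.exp ((β - 1) * (κ * Real.log 2)) := by
          rw [← Real.exp_mul, ← Real.exp_add]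
          ring_nf
      _ ≤ Real.exp (-ε) ^ (1 - β) * renyiAffinity β (w x) q := by gcongr; exact hqκ x
      _ = renyiAffinity β (w x) (Real.exp (-ε) • q) :=
          (renyiAffinity_smul_right (Real.exp_nonneg _) hq.1).symm
      _ ≤ renyiAffinity β (w x) Q :=
          renyiAffinity_mono_right hβ1.le (hw x).1 (smul_nonneg (Real.exp_nonneg _) hq.1) hqQ
  choose V hV hVeq using fun x => exists_relEntropy_eq_neg_log_renyiAffinity hβ0.ne' (hw x).1 hQpos
    ((Real.exp_pos _).trans_le (haff x))
  refine ⟨κ, hκ, (V, Q), ⟨fun x _ => hV x, hQ⟩, fun x => ?_⟩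
  rw [hVeq x, neg_le, ← neg_mul, neg_sub]
  exact (Real.le_log_iff_exp_le ((Real.exp_pos _).trans_le (haff x))).2 (haff x)

theorem exists_order_of_slope {α : ℝ} (hα0 : 0 < α) (hα1 : α < 1) {s : ℝ} (hs0 : 0 < s)
    (hs1 : s ≤ 1) : ∃ β, α ≤ β ∧ β < 1 ∧ α * (1 - β) / (β * (1 - α)) = s := by
  have hα : 0 < 1 - α := sub_pos.2 hα1
  have hsα : 0 < s * (1 - α) := mul_pos hs0 hα
  refine ⟨α / (α + s * (1 - α)), ?_, ?_, ?_⟩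
  · rw [le_div_iff₀ (by positivity)]
    nlinarith [mul_le_of_le_one_left hα.le hs1]
  · exact (div_lt_one (by positivity)).2 (by linarith)
  · field_simp
    ring

theorem mul_sub_le_of_le_of_coe_mul_sub_le {s κ r R : ℝ} (hs : 0 ≤ s) {I : EReal} (hκ : κ ≤ I)
    (h : (s : EReal) * (I - r) ≤ R) : s * (κ - r) ≤ R := by
  suffices ((s * (κ - r) : ℝ) : EReal) ≤ R by exact_mod_cast this
  rw [EReal.coe_mul, EReal.coe_sub]
  exact (mul_le_mul_of_nonneg_left (EReal.sub_le_sub hκ le_rfl) (EReal.coe_nonneg.2 hs)).trans h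

theorem exists_trade_off_of_renyiCap_le [Fintype X] [Nonempty X] [Nonempty Y] {α : ℝ}
    (hα0 : 0 < α) (hα1 : α < 1) {w : X → Y → ℝ} (hw : ∀ x, w x ∈ stdSimplex ℝ Y) {r R : ℝ}
    (hR : 0 ≤ R)
    (hcap : ∀ β, α ≤ β → β ≤ 1 → ((α * (1 - β) / (β * (1 - α)) : ℝ) : EReal) *
      (renyiCap (ENNReal.ofReal β) (fun x y => ENNReal.ofReal (w x y)) - r) ≤ R)
    {ε : ℝ} (hε : 0 < ε) {s : ℝ} (hs : s ∈ Set.Icc (0 : ℝ) 1) :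
    ∃ k ∈ testPairs w ((1 - Real.exp (-ε)) / Fintype.card Y), ∀ x,
      α / (1 - α) * relEntropy (k.1 x) (w x) + s * (relEntropy (k.1 x) k.2 - r * Real.log 2) ≤
        R * Real.log 2 + ε := by
  have hlog2 : 0 < Real.log 2 := Real.log_pos one_lt_two
  rcases hs.1.eq_or_lt with rfl | hs0
  · obtain ⟨Q, hQ, -⟩ := exists_smul_le_of_mem_stdSimplex (uniform_mem_stdSimplex (Y := Y))
      (Real.exp_nonneg (-ε)) (Real.exp_lt_one_iff.2 (neg_neg_of_pos hε)).le
    refine ⟨(w, Q), ⟨fun x _ => ⟨hw x, fun _ h => h⟩, hQ⟩, fun x => ?_⟩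
    rw [relEntropy_self]
    linarith [mul_nonneg hR hlog2.le]
  obtain ⟨β, hαβ, hβ1, hslope⟩ := exists_order_of_slope hα0 hα1 hs0 hs.2
  have hβ0 : 0 < β := hα0.trans_le hαβ
  have hβ : 0 < 1 - β := sub_pos.2 hβ1
  obtain ⟨κ, hκ, k, hk, hkβ⟩ := exists_tilted_pair hβ0 hβ1 hw hε
  have hsκ : s * (κ - r) ≤ R :=
    mul_sub_le_of_le_of_coe_mul_sub_le hs0.le hκ (hslope ▸ hcap β hαβ hβ1.le)
  refine ⟨k, hk, fun x => ?_⟩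
  have hratio : α / (1 - α) = s / (1 - β) * β := by
    rw [← hslope]
    field_simp
  calc α / (1 - α) * relEntropy (k.1 x) (w x) + s * (relEntropy (k.1 x) k.2 - r * Real.log 2)
      = s / (1 - β) * (β * relEntropy (k.1 x) (w x) + (1 - β) * relEntropy (k.1 x) k.2) -
          s * r * Real.log 2 := by
        rw [hratio]
        field_simp
        ring
    _ ≤ s / (1 - β) * ((1 - β) * (κ * Real.log 2 + ε)) - s * r * Real.log 2 := by
        gcongr
        exact hkβ x
    _ = s * (κ - r) * Real.log 2 + s * ε := by
        field_simp
        ring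
    _ ≤ R * Real.log 2 + ε :=
        add_le_add (mul_le_mul_of_nonneg_right hsκ hlog2.le) (mul_le_of_le_one_left hε.le hs.2)

variable {w : X → Y → ℝ} {δ : ℝ}

theorem convex_testPairs : Convex ℝ (testPairs w δ) :=
  (convex_pi fun x _ => convex_dominatedDists (w x)).prod (convex_distsGE δ)

theorem isCompact_testPairs : IsCompact (testPairs w δ) :=
  (isCompact_univ_pi fun x => isCompact_dominatedDists (w x)).prod (isCompact_distsGE δ)

theorem convexOn_relEntropy_channel (w : X → Y → ℝ) (x : X) :
    ConvexOn ℝ (testPairs w δ) fun k => relEntropy (k.1 x) (w x) :=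
  ((convexOn_relEntropy_left (w x)).comp_linearMap
    ((LinearMap.proj (R := ℝ) (φ := fun _ : X => Y → ℝ) x).comp (LinearMap.fst ℝ _ _))).subset
      (fun _ hk => (hk.1 x trivial).1.1) convex_testPairs

theorem convexOn_relEntropy_output (hδ : 0 < δ) (x : X) :
    ConvexOn ℝ (testPairs w δ) fun k => relEntropy (k.1 x) k.2 :=
  (convexOn_relEntropy.comp_linearMap
    ((LinearMap.proj (R := ℝ) (φ := fun _ : X => Y → ℝ) x).prodMap LinearMap.id)).subset
      (fun _ hk => ⟨(hk.1 x trivial).1.1, fun y _ => hδ.trans_le (hk.2.2 y trivial)⟩)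
      convex_testPairs

theorem exists_mem_testPairs_add_max_zero_le [Fintype X] {a ρ c : ℝ} (ha : 0 ≤ a) (hδ : 0 < δ)
    (h : ∀ s ∈ Set.Icc (0 : ℝ) 1, ∃ k ∈ testPairs w δ, ∀ x,
      a * relEntropy (k.1 x) (w x) + s * (relEntropy (k.1 x) k.2 - ρ) ≤ c)
    {p : X → ℝ} (hp : p ∈ stdSimplex ℝ X) :
    ∃ k ∈ testPairs w δ, a * ∑ x, p x * relEntropy (k.1 x) (w x) +
      max 0 (∑ x, p x * relEntropy (k.1 x) k.2 - ρ) ≤ c := by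
  have hcont : ContinuousOn (fun k : (X → Y → ℝ) × (Y → ℝ) =>
      ∑ x, p x * relEntropy (k.1 x) k.2) (testPairs w δ) :=
    continuousOn_finsetSum _ fun x _ => continuousOn_const.mul <|
      continuousOn_relEntropy.comp (f := fun k : (X → Y → ℝ) × (Y → ℝ) => (k.1 x, k.2))
        (by fun_prop) fun k hk y => (hδ.trans_le (hk.2.2 y trivial)).ne'
  refine exists_add_max_zero_le isCompact_testPairs
    (f := fun k => a * ∑ x, p x * relEntropy (k.1 x) (w x))
    (g := fun k => ∑ x, p x * relEntropy (k.1 x) k.2 - ρ)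
    ((convexOn_finset_sum _ convex_testPairs fun x _ =>
      (convexOn_relEntropy_channel w x).smul (hp.1 x)).smul ha)
    ((convexOn_finset_sum _ convex_testPairs fun x _ =>
      (convexOn_relEntropy_output hδ x).smul (hp.1 x)).sub (concaveOn_const ρ convex_testPairs))
    (continuous_const.mul (continuous_finsetSum _ fun x _ => continuous_const.mul <|
      (continuous_relEntropy_left (w x)).comp (by fun_prop))).continuousOn
    (hcont.sub continuousOn_const) fun s hs => ?_
  obtain ⟨k, hk, hle⟩ := h s hs
  have havg : ∀ b : ℝ, ∑ x, p x * b = b := fun b => by rw [← Finset.sum_mul, hp.2, one_mul]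
  refine ⟨k, hk, ?_⟩
  calc a * ∑ x, p x * relEntropy (k.1 x) (w x) +
        s * (∑ x, p x * relEntropy (k.1 x) k.2 - ρ)
      = ∑ x, p x * (a * relEntropy (k.1 x) (w x) + s * (relEntropy (k.1 x) k.2 - ρ)) := by
        conv_lhs => rw [← havg ρ]
        simp only [mul_add, mul_sub, Finset.sum_add_distrib, Finset.sum_sub_distrib,
          Finset.mul_sum, mul_left_comm (p _)]
    _ ≤ ∑ x, p x * c := Finset.sum_le_sum fun x _ => mul_le_mul_of_nonneg_left (hle x) (hp.1 x)
    _ = c := havg c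

end TestChannels

/-- The product `∏ i, V i` of the weight functions `V i`: the law of independent coordinates. -/
def piWeight {ι Z : Type*} [Fintype ι] (V : ι → Z → ℝ) : (ι → Z) → ℝ := fun z => ∏ i, V i (z i)

section ProductWeights

variable {ι Z : Type*} [Fintype ι] {V : ι → Z → ℝ}

theorem piWeight_nonneg (hV : ∀ i, 0 ≤ V i) : 0 ≤ piWeight V := fun z =>
  Finset.prod_nonneg fun i _ => hV i (z i)

theorem piWeight_pos {z : ι → Z} (hV : ∀ i, 0 < V i (z i)) : 0 < piWeight V z :=
  Finset.prod_pos fun i _ => hV i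

theorem piWeight_ne_zero_iff {z : ι → Z} : piWeight V z ≠ 0 ↔ ∀ i, V i (z i) ≠ 0 := by
  simp [piWeight, Finset.prod_ne_zero_iff]

theorem log_piWeight_div_piWeight {U : ι → Z → ℝ} {z : ι → Z} (hV : ∀ i, V i (z i) ≠ 0)
    (hU : ∀ i, U i (z i) ≠ 0) :
    Real.log (piWeight V z / piWeight U z) = ∑ i, Real.log (V i (z i) / U i (z i)) := by
  rw [piWeight, piWeight, ← Finset.prod_div_distrib,
    Real.log_prod fun i _ => div_ne_zero (hV i) (hU i)]

variable [DecidableEq ι] [Fintype Z]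

theorem sum_piWeight_mul_prod (hV : ∀ i, ∑ b, V i b = 1) (s : Finset ι) (h : ι → Z → ℝ) :
    ∑ z, piWeight V z * ∏ i ∈ s, h i (z i) = ∏ i ∈ s, ∑ b, V i b * h i b := by
  have hterm : ∀ z, piWeight V z * ∏ i ∈ s, h i (z i) =
      ∏ i, V i (z i) * if i ∈ s then h i (z i) else 1 := fun z => by
    rw [Finset.prod_mul_distrib, Fintype.prod_ite_mem, piWeight]
  have hfactor : ∀ i, ∑ b, V i b * (if i ∈ s then h i b else 1) =
      if i ∈ s then ∑ b, V i b * h i b else 1 := fun i => by split_ifs <;> simp [hV]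
  rw [Fintype.sum_congr _ _ hterm, ← Fintype.prod_sum fun i b => V i b * if i ∈ s then h i b else 1,
    Fintype.prod_congr _ _ hfactor, Fintype.prod_ite_mem]

theorem piWeight_mem_stdSimplex (hV : ∀ i, V i ∈ stdSimplex ℝ Z) :
    piWeight V ∈ stdSimplex ℝ (ι → Z) :=
  ⟨piWeight_nonneg fun i => (hV i).1,
    by simpa using sum_piWeight_mul_prod (fun i => (hV i).2) ∅ fun _ _ => 1⟩

theorem sum_piWeight_mul_apply (hV : ∀ i, ∑ b, V i b = 1) (i : ι) (f : Z → ℝ) :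
    ∑ z, piWeight V z * f (z i) = ∑ b, V i b * f b := by
  simpa using sum_piWeight_mul_prod hV {i} fun _ => f

theorem sum_piWeight_mul_apply_mul_apply (hV : ∀ i, ∑ b, V i b = 1) {i j : ι} (hij : i ≠ j)
    (f g : Z → ℝ) : ∑ z, piWeight V z * (f (z i) * g (z j)) =
      (∑ b, V i b * f b) * ∑ b, V j b * g b := by
  have h := sum_piWeight_mul_prod hV {i, j} fun k => if k = i then f else g
  simpa [Finset.prod_pair hij, hij.symm] using h

theorem sum_piWeight_mul_apply_mul_sum_erase (hV : ∀ i, ∑ b, V i b = 1) (j : ι) (g f : Z → ℝ) :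
    ∑ z, piWeight V z * (g (z j) * ∑ i ∈ Finset.univ.erase j, f (z i)) =
      (∑ b, V j b * g b) * ∑ i ∈ Finset.univ.erase j, ∑ b, V i b * f b := by
  simp only [Finset.mul_sum (s := Finset.univ.erase j)]
  rw [Finset.sum_comm]
  exact Finset.sum_congr rfl fun i hi =>
    sum_piWeight_mul_apply_mul_apply hV (Finset.ne_of_mem_erase hi).symm g f

theorem sum_piWeight_mul_sum (hV : ∀ i, ∑ b, V i b = 1) (h : ι → Z → ℝ) :
    ∑ z, piWeight V z * ∑ i, h i (z i) = ∑ i, ∑ b, V i b * h i b := by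
  simp only [Finset.mul_sum]
  rw [Finset.sum_comm]
  exact Finset.sum_congr rfl fun i _ => sum_piWeight_mul_apply hV i (h i)

theorem sum_piWeight_mul_sum_sq (hV : ∀ i, ∑ b, V i b = 1) {h : ι → Z → ℝ}
    (hh : ∀ i, ∑ b, V i b * h i b = 0) :
    ∑ z, piWeight V z * (∑ i, h i (z i)) ^ 2 = ∑ i, ∑ b, V i b * h i b ^ 2 := by
  simp only [sq, Finset.sum_mul_sum]
  simp only [Finset.mul_sum]
  rw [Finset.sum_comm]
  refine Finset.sum_congr rfl fun i _ => ?_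
  rw [Finset.sum_comm, Finset.sum_eq_single i]
  · exact sum_piWeight_mul_apply hV i fun b => h i b * h i b
  · intro j _ hji
    rw [sum_piWeight_mul_apply_mul_apply hV hji.symm (h i) (h j), hh i, zero_mul]
  · simp

theorem sum_mul_sub_sq_le {v : Z → ℝ} (hv : ∑ b, v b = 1) (f : Z → ℝ) :
    ∑ b, v b * (f b - ∑ c, v c * f c) ^ 2 ≤ ∑ b, v b * f b ^ 2 := by
  set m := ∑ c, v c * f c with hm
  have hexpand : ∑ b, v b * (f b - m) ^ 2 = ∑ b, v b * f b ^ 2 - m ^ 2 :=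
    calc ∑ b, v b * (f b - m) ^ 2
        = ∑ b, (v b * f b ^ 2 - 2 * m * (v b * f b) + m ^ 2 * v b) :=
          Finset.sum_congr rfl fun b _ => by ring
      _ = ∑ b, v b * f b ^ 2 - m ^ 2 := by
          rw [Finset.sum_add_distrib, Finset.sum_sub_distrib, ← Finset.mul_sum, ← Finset.mul_sum,
            hv, ← hm]
          ring
  linarith [sq_nonneg m]

theorem sum_piWeight_mul_max_zero_le (hV : ∀ i, V i ∈ stdSimplex ℝ Z) (h : ι → Z → ℝ) (t : ℝ) :
    ∑ z, piWeight V z * max 0 (∑ i, h i (z i) - t) ≤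
      max 0 (∑ i, ∑ b, V i b * h i b - t) + √(∑ i, ∑ b, V i b * h i b ^ 2) := by
  have hV1 : ∀ i, ∑ b, V i b = 1 := fun i => (hV i).2
  obtain ⟨hπ0, hπ1⟩ := piWeight_mem_stdSimplex hV
  set m := ∑ i, ∑ b, V i b * h i b with hm
  have hmean : ∑ z, piWeight V z * |∑ i, h i (z i) - m| ≤ √(∑ i, ∑ b, V i b * h i b ^ 2) := by
    refine Real.le_sqrt_of_sq_le ?_
    calc (∑ z, piWeight V z * |∑ i, h i (z i) - m|) ^ 2
        ≤ ∑ z, piWeight V z * |∑ i, h i (z i) - m| ^ 2 :=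
          Real.pow_arith_mean_le_arith_mean_pow _ (piWeight V) _ (fun z _ => hπ0 z) hπ1
            (fun _ _ => abs_nonneg _) 2
      _ = ∑ z, piWeight V z * (∑ i, (h i (z i) - ∑ b, V i b * h i b)) ^ 2 := by
          simp only [sq_abs, Finset.sum_sub_distrib, ← hm]
      _ = ∑ i, ∑ b, V i b * (h i b - ∑ c, V i c * h i c) ^ 2 :=
          sum_piWeight_mul_sum_sq hV1 (h := fun i b => h i b - ∑ c, V i c * h i c) fun i => by
            simp only [mul_sub, Finset.sum_sub_distrib, ← Finset.sum_mul, hV1, one_mul, sub_self]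
      _ ≤ ∑ i, ∑ b, V i b * h i b ^ 2 :=
          Finset.sum_le_sum fun i _ => sum_mul_sub_sq_le (hV1 i) (h i)
  calc ∑ z, piWeight V z * max 0 (∑ i, h i (z i) - t)
      ≤ ∑ z, (piWeight V z * max 0 (m - t) + piWeight V z * |∑ i, h i (z i) - m|) := by
        refine Finset.sum_le_sum fun z _ => ?_
        rw [← mul_add]
        refine mul_le_mul_of_nonneg_left (max_le (by positivity) ?_) (hπ0 z)
        linarith [le_max_right 0 (m - t), le_abs_self (∑ i, h i (z i) - m)]
    _ = max 0 (m - t) + ∑ z, piWeight V z * |∑ i, h i (z i) - m| := by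
        rw [Finset.sum_add_distrib, ← Finset.sum_mul, hπ1, one_mul]
    _ ≤ max 0 (m - t) + √(∑ i, ∑ b, V i b * h i b ^ 2) := by gcongr

theorem relEntropy_piWeight (hV : ∀ i, ∑ b, V i b = 1) {U : ι → Z → ℝ}
    (hVU : ∀ i b, V i b ≠ 0 → U i b ≠ 0) :
    relEntropy (piWeight V) (piWeight U) = ∑ i, relEntropy (V i) (U i) := by
  simp only [relEntropy]
  rw [← sum_piWeight_mul_sum hV fun i b => Real.log (V i b / U i b)]
  refine Finset.sum_congr rfl fun z _ => ?_
  rcases eq_or_ne (piWeight V z) 0 with hz | hz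
  · simp [hz]
  have hzi : ∀ i, V i (z i) ≠ 0 := piWeight_ne_zero_iff.1 hz
  rw [log_piWeight_div_piWeight hzi fun i => hVU i _ (hzi i)]

end ProductWeights

theorem mul_log_sq_le {t D : ℝ} (ht : 0 ≤ t) (htD : t ≤ D) (hD : 1 ≤ D) :
    t * Real.log t ^ 2 ≤ 4 * D ^ 2 := by
  rcases ht.eq_or_lt with rfl | ht
  · simp only [zero_mul]
    positivity
  have hs : 0 < √t := Real.sqrt_pos.2 ht
  have hle : |Real.log √t * √t| ≤ D := by
    rcases le_total √t 1 with h1 | h1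
    · exact (Real.abs_log_mul_self_lt _ hs h1).le.trans hD
    · rw [abs_of_nonneg (mul_nonneg (Real.log_nonneg h1) hs.le)]
      calc Real.log √t * √t ≤ √t * √t := by gcongr; exact Real.log_le_self hs.le
        _ = t := Real.mul_self_sqrt ht.le
        _ ≤ D := htD
  calc t * Real.log t ^ 2 = 4 * (Real.log √t * √t) ^ 2 := by
        rw [Real.log_sqrt ht.le, mul_pow, Real.sq_sqrt ht.le]
        ring
    _ ≤ 4 * D ^ 2 :=
        mul_le_mul_of_nonneg_left (sq_le_sq.2 (hle.trans (le_abs_self D))) zero_le_four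

section InformationDensity

variable {Z : Type*} [Fintype Z]

theorem sum_mul_log_div_sq_le {δ : ℝ} (hδ : 0 < δ) {v q : Z → ℝ} (hv : v ∈ stdSimplex ℝ Z)
    (hq : q ∈ distsGE Z δ) : ∑ z, v z * Real.log (v z / q z) ^ 2 ≤ 4 / δ ^ 2 := by
  have hterm : ∀ z, v z * Real.log (v z / q z) ^ 2 ≤ q z * (4 / δ ^ 2) := fun z => by
    have hδq : δ ≤ q z := hq.2 z trivial
    have hq0 : 0 < q z := hδ.trans_le hδq
    have hle := mul_log_sq_le (D := δ⁻¹) (div_nonneg (hv.1 z) hq0.le)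
      (by simpa using div_le_div₀ zero_le_one (mem_Icc_of_mem_stdSimplex hv z).2 hδ hδq)
      ((one_le_inv₀ hδ).2 (hδq.trans (mem_Icc_of_mem_stdSimplex hq.1 z).2))
    calc v z * Real.log (v z / q z) ^ 2
        = q z * (v z / q z * Real.log (v z / q z) ^ 2) := by field_simp
      _ ≤ q z * (4 * δ⁻¹ ^ 2) := by gcongr
      _ = q z * (4 / δ ^ 2) := by rw [inv_pow, div_eq_mul_inv]
  calc ∑ z, v z * Real.log (v z / q z) ^ 2
      ≤ ∑ z, q z * (4 / δ ^ 2) := Finset.sum_le_sum fun z _ => hterm z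
    _ = 4 / δ ^ 2 := by rw [← Finset.sum_mul, hq.1.2, one_mul]

theorem log_div_min_half_le {v q Q A M : ℝ} (hv : 0 < v) (hq : 0 < q) (hQ : 0 < Q) (hA : 1 ≤ A)
    (hM : 0 < M) (hqQ : q ≤ A * Q) :
    Real.log (v / (min v (M * Q) / 2)) ≤
      Real.log 2 + Real.log A + max 0 (Real.log (v / q) - Real.log M) := by
  have hA0 : 0 < A := one_pos.trans_le hA
  have hmin : 0 < min v (M * Q) := lt_min hv (by positivity)
  rw [div_div_eq_mul_div, mul_div_right_comm, Real.log_mul (div_pos hv hmin).ne' two_ne_zero,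
    add_comm, add_assoc]
  gcongr
  rcases min_choice v (M * Q) with h | h <;> rw [h]
  · rw [div_self hv.ne', Real.log_one]
    exact add_nonneg (Real.log_nonneg hA) (le_max_left _ _)
  · calc Real.log (v / (M * Q)) ≤ Real.log (A * (v / q / M)) := by
          refine Real.log_le_log (by positivity) ?_
          rw [div_div, mul_div_assoc', div_le_div_iff₀ (by positivity) (by positivity)]
          nlinarith [mul_le_mul_of_nonneg_left hqQ (mul_nonneg hv.le hM.le)]
      _ = Real.log A + (Real.log (v / q) - Real.log M) := by
          rw [Real.log_mul hA0.ne' (by positivity), Real.log_div (by positivity) hM.ne']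
      _ ≤ Real.log A + max 0 (Real.log (v / q) - Real.log M) := by gcongr; exact le_max_right _ _

theorem relEntropy_min_half_le {v q Q : Z → ℝ} {A M : ℝ} (hv : v ∈ stdSimplex ℝ Z)
    (hq : ∀ z, 0 < q z) (hQ : ∀ z, 0 < Q z) (hA : 1 ≤ A) (hM : 0 < M) (hqQ : q ≤ A • Q) :
    relEntropy v (fun z => min (v z) (M * Q z) / 2) ≤
      Real.log 2 + Real.log A + ∑ z, v z * max 0 (Real.log (v z / q z) - Real.log M) := by
  have hterm : ∀ z, v z * Real.log (v z / (min (v z) (M * Q z) / 2)) ≤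
      v z * (Real.log 2 + Real.log A) + v z * max 0 (Real.log (v z / q z) - Real.log M) :=
    fun z => by
      rcases (hv.1 z).eq_or_lt with h | h
      · simp [← h]
      · rw [← mul_add]
        exact mul_le_mul_of_nonneg_left (log_div_min_half_le h (hq z) (hQ z) hA hM (hqQ z)) h.le
  refine (Finset.sum_le_sum fun z _ => hterm z).trans_eq ?_
  rw [Finset.sum_add_distrib, ← Finset.sum_mul, hv.2, one_mul]

theorem relEntropy_piWeight_min_half_le {ι : Type*} [Fintype ι] [DecidableEq ι] {δ A M : ℝ}
    (hδ : 0 < δ) (hA : 1 ≤ A) (hM : 0 < M) {V : ι → Z → ℝ} (hV : ∀ i, V i ∈ stdSimplex ℝ Z)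
    {q : Z → ℝ} (hq : q ∈ distsGE Z δ) {Q : (ι → Z) → ℝ} (hQ0 : ∀ z, 0 < Q z)
    (hQ : piWeight (fun _ => q) ≤ A • Q) :
    relEntropy (piWeight V) (fun z => min (piWeight V z) (M * Q z) / 2) ≤
      Real.log 2 + Real.log A + (max 0 (∑ i, relEntropy (V i) q - Real.log M) +
        √(Fintype.card ι * (4 / δ ^ 2))) := by
  have hq0 : ∀ z, 0 < q z := fun z => hδ.trans_le (hq.2 z trivial)
  refine (relEntropy_min_half_le (piWeight_mem_stdSimplex hV) (fun z => piWeight_pos fun i => hq0 _)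
    hQ0 hA hM hQ).trans (add_le_add le_rfl ?_)
  have hdensity : ∀ z, piWeight V z *
      max 0 (Real.log (piWeight V z / piWeight (fun _ : ι => q) z) - Real.log M) =
      piWeight V z * max 0 (∑ i, Real.log (V i (z i) / q (z i)) - Real.log M) := fun z => by
    rcases eq_or_ne (piWeight V z) 0 with hz | hz
    · simp [hz]
    · rw [log_piWeight_div_piWeight (piWeight_ne_zero_iff.1 hz) fun i => (hq0 _).ne']
  rw [Fintype.sum_congr _ _ hdensity]
  refine (sum_piWeight_mul_max_zero_le hV (fun i b => Real.log (V i b / q b)) _).trans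
    (add_le_add le_rfl (Real.sqrt_le_sqrt ?_))
  simpa using Finset.sum_le_card_nsmul Finset.univ _ _ fun i _ =>
    sum_mul_log_div_sq_le hδ (hV i) hq

theorem renyiD_piWeight_le {ι : Type*} [Fintype ι] [DecidableEq ι] {α δ A M : ℝ} (hα0 : 0 < α)
    (hα1 : α < 1) (hδ : 0 < δ) (hA : 1 ≤ A) (hM : 0 < M) {V u : ι → Z → ℝ} (hu : ∀ i, 0 ≤ u i)
    (hV : ∀ i, V i ∈ dominatedDists (u i)) {q : Z → ℝ} (hq : q ∈ distsGE Z δ)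
    {Q : (ι → Z) → ℝ} (hQ : piWeight (fun _ => q) ≤ A • Q) {N : (ι → Z) → ℝ≥0∞}
    (hN : ∀ z, ENNReal.ofReal (min (piWeight V z) (M * Q z) / 2) ≤ N z) :
    renyiD (ENNReal.ofReal α) (fun z => ENNReal.ofReal (piWeight u z)) N ≤
      (((α / (1 - α) * ∑ i, relEntropy (V i) (u i) +
        max 0 (∑ i, relEntropy (V i) q - Real.log M) + Real.log 2 + Real.log A +
          √(Fintype.card ι * (4 / δ ^ 2))) / Real.log 2 : ℝ) : EReal) := by
  have hVs : ∀ i, V i ∈ stdSimplex ℝ Z := fun i => (hV i).1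
  have hπ : piWeight V ∈ stdSimplex ℝ (ι → Z) := piWeight_mem_stdSimplex hVs
  have hQ0 : ∀ z, 0 < Q z := fun z => pos_of_mul_pos_right
    ((piWeight_pos fun _ => hδ.trans_le (hq.2 _ trivial)).trans_le (hQ z)) (zero_le_one.trans hA)
  have hVu : ∀ i b, V i b ≠ 0 → u i b ≠ 0 := fun i b => mt ((hV i).2 b)
  have hpos : ∀ z, piWeight V z ≠ 0 →
      0 < piWeight u z ∧ 0 < min (piWeight V z) (M * Q z) / 2 := fun z hz =>
    ⟨piWeight_pos fun i => (hu i _).lt_of_ne' (hVu i _ (piWeight_ne_zero_iff.1 hz i)),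
      half_pos (lt_min ((hπ.1 z).lt_of_ne' hz) (mul_pos hM (hQ0 z)))⟩
  refine (renyiD_ofReal_le_relEntropy hα0 hα1 hπ (piWeight_nonneg hu)
    (fun z => div_nonneg (le_min (hπ.1 z) (mul_pos hM (hQ0 z)).le) zero_le_two) hpos hN).trans ?_
  rw [EReal.coe_le_coe_iff, relEntropy_piWeight (fun i => (hVs i).2) hVu]
  gcongr ?_ / _
  linarith [relEntropy_piWeight_min_half_le hδ hA hM hVs hq hQ0 hQ]

end InformationDensity

section Simulation

theorem isSimulation_of_deterministic_decoder {X Y K : Type*} [Fintype X] [Fintype Y] [Fintype K]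
    {M : ℕ} (hM : 0 < M) {c : ℝ} (hc : Real.logb 2 M ≤ c) {P : K → ℝ} (hP : P ∈ stdSimplex ℝ K)
    {e : X → K → Fin M → ℝ} (he : ∀ x k, e x k ∈ stdSimplex ℝ (Fin M)) (d : K → Fin M → Y) :
    IsSimulation c fun x y =>
      ENNReal.ofReal (∑ k, P k * ∑ j, if d k j = y then e x k j else 0) := by
  let φ := (Fintype.equivFin K).symm
  refine ⟨Fintype.card K, M, fun i => ENNReal.ofReal (P (φ i)),
    fun x i j => ENNReal.ofReal (e x (φ i) j), fun j i y => if d (φ i) j = y then 1 else 0, hM, hc,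
    (φ.sum_comp _).trans (isDist_ofReal hP), fun x i => isDist_ofReal (he x (φ i)), by simp,
    fun x y => ?_⟩
  have hterm : ∀ k j, 0 ≤ if d k j = y then e x k j else 0 := fun k j => by
    split_ifs
    exacts [(he x k).1 j, le_rfl]
  have hsum : ∀ k, 0 ≤ ∑ j, if d k j = y then e x k j else 0 := fun k =>
    Finset.sum_nonneg fun j _ => hterm k j
  beta_reduce
  rw [ENNReal.ofReal_sum_of_nonneg fun k _ => mul_nonneg (hP.1 k) (hsum k), ← φ.sum_comp]
  refine Finset.sum_congr rfl fun i _ => ?_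
  rw [ENNReal.ofReal_mul (hP.1 _), ENNReal.ofReal_sum_of_nonneg fun j _ => hterm (φ i) j,
    Finset.mul_sum]
  refine Finset.sum_congr rfl fun j _ => ?_
  split_ifs <;> simp

variable {J Z : Type*} [Fintype J] [DecidableEq J] [Nonempty J] [Fintype Z]

-- The witness is the likelihood encoder `a j / ∑ i, a i`; `1 / s ≥ 1 - s / 4` by AM-GM.
theorem exists_encoder_ge {a : J → ℝ} (ha0 : ∀ j, 0 ≤ a j) (ha1 : ∀ j, a j ≤ 1) :
    ∃ e ∈ stdSimplex ℝ J, ∀ j,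
      a j * (3 / 4 - (∑ i ∈ Finset.univ.erase j, a i) / 4) ≤ e j := by
  rcases (Finset.sum_nonneg fun j (_ : j ∈ Finset.univ) => ha0 j).eq_or_lt with hs | hs
  · have ha : ∀ j, a j = 0 := fun j =>
      (Finset.sum_eq_zero_iff_of_nonneg fun j _ => ha0 j).1 hs.symm j (Finset.mem_univ j)
    exact ⟨_, uniform_mem_stdSimplex, fun j => by simp [ha]⟩
  refine ⟨fun j => a j / ∑ i, a i, ⟨fun j => div_nonneg (ha0 j) hs.le, ?_⟩, fun j => ?_⟩
  · rw [← Finset.sum_div, div_self hs.ne']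
  have hsplit := Finset.add_sum_erase Finset.univ a (Finset.mem_univ j)
  set s := ∑ i, a i
  calc a j * (3 / 4 - (∑ i ∈ Finset.univ.erase j, a i) / 4)
      ≤ a j * (1 - s / 4) := mul_le_mul_of_nonneg_left (by linarith [ha1 j]) (ha0 j)
    _ ≤ a j * s⁻¹ := by
        refine mul_le_mul_of_nonneg_left ?_ (ha0 j)
        rw [← one_div, le_div_iff₀ hs]
        nlinarith [sq_nonneg (s / 2 - 1)]
    _ = a j / s := (div_eq_mul_inv _ _).symm

theorem half_le_sum_piWeight_mul {q f : Z → ℝ} (hq : q ∈ stdSimplex ℝ Z) (hf : 0 ≤ f)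
    (hqf : ∑ z, q z * f z ≤ (Fintype.card J : ℝ)⁻¹) {e : (J → Z) → J → ℝ}
    (he : ∀ k j, f (k j) * (3 / 4 - (∑ i ∈ Finset.univ.erase j, f (k i)) / 4) ≤ e k j) (z : Z)
    (j : J) :
    q z * f z / 2 ≤ ∑ k, piWeight (fun _ : J => q) k * if k j = z then e k j else 0 := by
  let g : Z → ℝ := fun b => if b = z then f b else 0
  have hqz : 0 ≤ q z * f z := mul_nonneg (hq.1 z) (hf z)
  have hg : ∑ b, q b * g b = q z * f z := by simp [g]
  have hq1 : ∀ _ : J, ∑ b, q b = 1 := fun _ => hq.2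
  have hrest : ∑ _i ∈ Finset.univ.erase j, ∑ b, q b * f b ≤ 1 := by
    rw [Finset.sum_const, nsmul_eq_mul]
    have hcard : ((Finset.univ.erase j).card : ℝ) ≤ Fintype.card J := by
      exact_mod_cast Finset.card_le_univ _
    calc ((Finset.univ.erase j).card : ℝ) * ∑ b, q b * f b
        ≤ Fintype.card J * (Fintype.card J : ℝ)⁻¹ :=
          mul_le_mul hcard hqf (Finset.sum_nonneg fun b _ => mul_nonneg (hq.1 b) (hf b))
            (Nat.cast_nonneg _)
      _ = 1 := mul_inv_cancel₀ (by positivity)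
  have hterm : ∀ k : J → Z, 3 / 4 * g (k j) -
      (g (k j) * ∑ i ∈ Finset.univ.erase j, f (k i)) / 4 ≤ if k j = z then e k j else 0 := by
    intro k
    by_cases hk : k j = z
    · simp only [g, hk, if_true]
      linarith [hk ▸ he k j]
    · simp [g, hk]
  calc q z * f z / 2
      ≤ 3 / 4 * (q z * f z) -
          (q z * f z * ∑ _i ∈ Finset.univ.erase j, ∑ b, q b * f b) / 4 := by
        nlinarith [mul_le_of_le_one_right hqz hrest]
    _ = ∑ k, piWeight (fun _ : J => q) k * (3 / 4 * g (k j) -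
          (g (k j) * ∑ i ∈ Finset.univ.erase j, f (k i)) / 4) := by
        simp only [mul_sub, Finset.sum_sub_distrib, mul_left_comm _ (3 / 4 : ℝ), mul_div_assoc',
          ← Finset.sum_div, ← Finset.mul_sum (a := (3 / 4 : ℝ)),
          sum_piWeight_mul_apply hq1 j, sum_piWeight_mul_apply_mul_sum_erase hq1 j, hg]
    _ ≤ ∑ k, piWeight (fun _ : J => q) k * if k j = z then e k j else 0 :=
        Finset.sum_le_sum fun k _ =>
          mul_le_mul_of_nonneg_left (hterm k) (piWeight_nonneg (fun _ => hq.1) k)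

theorem exists_isSimulation_ge {X : Type*} [Fintype X] {M : ℕ} (hM : 0 < M) {c : ℝ}
    (hc : Real.logb 2 M ≤ c) {q : Z → ℝ} (hq : q ∈ stdSimplex ℝ Z) {t : X → Z → ℝ}
    (ht0 : ∀ x, 0 ≤ t x) (ht1 : ∀ x, ∑ z, t x z ≤ 1) (htq : ∀ x, t x ≤ (M : ℝ) • q) :
    ∃ N : X → Z → ℝ≥0∞, IsSimulation c N ∧ ∀ x z, ENNReal.ofReal (t x z / 2) ≤ N x z := by
  have : NeZero M := ⟨hM.ne'⟩
  have hM' : (0 : ℝ) < M := Nat.cast_pos.2 hM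
  let f : X → Z → ℝ := fun x z => t x z / (M * q z)
  have hMq : ∀ z, 0 ≤ M * q z := fun z => mul_nonneg hM'.le (hq.1 z)
  have hf0 : ∀ x z, 0 ≤ f x z := fun x z => div_nonneg (ht0 x z) (hMq z)
  have hf1 : ∀ x z, f x z ≤ 1 := fun x z => div_le_one_of_le₀ (htq x z) (hMq z)
  have hqf : ∀ x z, q z * f x z = t x z / M := fun x z => by
    rcases eq_or_ne (q z) 0 with hz | hz
    · have ht : t x z = 0 := le_antisymm (by simpa [hz] using htq x z) (ht0 x z)
      simp [hz, ht]
    · simp only [f]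
      field_simp
  have hmean : ∀ x, ∑ z, q z * f x z ≤ (Fintype.card (Fin M) : ℝ)⁻¹ := fun x => by
    simp only [hqf, ← Finset.sum_div, Fintype.card_fin, ← one_div]
    gcongr
    exact ht1 x
  choose e he hge using fun x (k : Fin M → Z) =>
    exists_encoder_ge (fun j => hf0 x (k j)) fun j => hf1 x (k j)
  refine ⟨_, isSimulation_of_deterministic_decoder hM hc
    (piWeight_mem_stdSimplex fun _ : Fin M => hq) he fun k j => k j, fun x z => ?_⟩
  refine ENNReal.ofReal_le_ofReal ?_
  calc t x z / 2 = ∑ _j : Fin M, q z * f x z / 2 := by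
        rw [Finset.sum_const, Finset.card_univ, Fintype.card_fin, nsmul_eq_mul, hqf]
        field_simp
    _ ≤ ∑ j, ∑ k, piWeight (fun _ : Fin M => q) k * if k j = z then e x k j else 0 :=
        Finset.sum_le_sum fun j _ => half_le_sum_piWeight_mul hq (hf0 x) (hmean x) (hge x) z j
    _ = ∑ k, piWeight (fun _ : Fin M => q) k * ∑ j, if k j = z then e x k j else 0 := by
        rw [Finset.sum_comm]
        simp only [Finset.mul_sum]

end Simulation

section Types

variable {X : Type*} [Fintype X]

theorem exists_mem_stdSimplex_forall_le_card_smul {T : Type*} {s : Finset T} (hs : s.Nonempty)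
    {q : T → X → ℝ} (hq : ∀ t ∈ s, q t ∈ stdSimplex ℝ X) :
    ∃ Q ∈ stdSimplex ℝ X, ∀ t ∈ s, q t ≤ (s.card : ℝ) • Q := by
  have hcard : (s.card : ℝ) ≠ 0 := Nat.cast_ne_zero.2 hs.card_ne_zero
  refine ⟨∑ t ∈ s, (s.card : ℝ)⁻¹ • q t,
    (convex_stdSimplex ℝ X).sum_mem (fun _ _ => by positivity) (by simp [hcard]) hq,
    fun t ht => ?_⟩
  rw [← Finset.smul_sum, smul_inv_smul₀ hcard]
  exact Finset.single_le_sum (fun t ht => (hq t ht).1) ht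

variable [DecidableEq X]

theorem numTypes_le (n : ℕ) : numTypes X n ≤ (n + 1) ^ Fintype.card X := by
  have hsub : (Finset.univ.image fun xs : Fin n → X => seqType xs) ⊆
      Fintype.piFinset fun _ : X => Finset.range (n + 1) := by
    refine Finset.image_subset_iff.2 fun xs _ => Fintype.mem_piFinset.2 fun x => ?_
    exact Finset.mem_range_succ_iff.2 ((Finset.card_le_univ _).trans_eq (Fintype.card_fin n))
  simpa [numTypes] using Finset.card_le_card hsub

/-- The probability distribution with count vector `t`, for sequences of length `n ≠ 0`: it turns
the type `seqType xs` of `xs` into the empirical distribution of `xs`. -/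
def typeDist (n : ℕ) (t : X → ℕ) : X → ℝ := fun x => t x / n

theorem sum_comp_eq_sum_typeDist_mul {n : ℕ} (hn : n ≠ 0) (xs : Fin n → X) (φ : X → ℝ) :
    ∑ i, φ (xs i) = n * ∑ x, typeDist n (seqType xs) x * φ x := by
  have hn' : (n : ℝ) ≠ 0 := Nat.cast_ne_zero.2 hn
  rw [← Finset.sum_fiberwise' Finset.univ xs φ, Finset.mul_sum]
  refine Finset.sum_congr rfl fun x _ => ?_
  rw [Finset.sum_const, nsmul_eq_mul, typeDist, seqType]
  field_simp

theorem typeDist_seqType_mem_stdSimplex {n : ℕ} (hn : n ≠ 0) (xs : Fin n → X) :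
    typeDist n (seqType xs) ∈ stdSimplex ℝ X := by
  refine ⟨fun x => by rw [typeDist]; positivity, ?_⟩
  have h := sum_comp_eq_sum_typeDist_mul hn xs 1
  simpa [hn] using h

end Types

theorem exists_nat_logb_le {b : ℝ} (hb : 0 ≤ b) :
    ∃ M : ℕ, 0 < M ∧ Real.logb 2 M ≤ b ∧ b * Real.log 2 - Real.log 2 ≤ Real.log M := by
  have hpow : (1 : ℝ) ≤ 2 ^ b := Real.one_le_rpow one_le_two hb
  have hM : 0 < ⌊(2 : ℝ) ^ b⌋₊ := Nat.floor_pos.2 hpow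
  have hM' : (1 : ℝ) ≤ ⌊(2 : ℝ) ^ b⌋₊ := Nat.one_le_cast.2 hM
  refine ⟨_, hM, ?_, ?_⟩
  · rw [Real.logb_le_iff_le_rpow one_lt_two (one_pos.trans_le hM')]
    exact Nat.floor_le (zero_le_one.trans hpow)
  · rw [← Real.log_rpow two_pos, ← Real.log_div (by positivity) two_ne_zero]
    exact Real.log_le_log (by positivity) (by linarith [Nat.lt_floor_add_one ((2 : ℝ) ^ b)])

theorem tendsto_overhead_div_atTop (a b c : ℝ) :
    Tendsto (fun n : ℕ => (a * Real.log (n + 1) + √(n * b) + c) / n) atTop (nhds 0) := by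
  have hcast : Tendsto (fun n : ℕ => (n : ℝ)) atTop atTop := tendsto_natCast_atTop_atTop
  have hinv : Tendsto (fun n : ℕ => (n : ℝ)⁻¹) atTop (nhds 0) := tendsto_inv_atTop_zero.comp hcast
  have hlog : Tendsto (fun n : ℕ => Real.log (n + 1) / n) atTop (nhds 0) := by
    have hshift : (fun n : ℕ => (n : ℝ) + 1) =O[atTop] fun n => (n : ℝ) :=
      (Asymptotics.isBigO_refl _ _).add
        ((Asymptotics.isLittleO_const_id_atTop 1).comp_tendsto hcast).isBigO
    exact ((Real.isLittleO_log_id_atTop.comp_tendsto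
      (tendsto_atTop_add_const_right _ 1 hcast)).trans_isBigO hshift).tendsto_div_nhds_zero
  have hsqrt : Tendsto (fun n : ℕ => √(n * b) / n) atTop (nhds 0) := by
    have heq : ∀ n : ℕ, √(b / n) = √(n * b) / n := fun n => by
      rw [mul_comm, Real.sqrt_div' _ n.cast_nonneg, Real.sqrt_mul' _ n.cast_nonneg, mul_div_assoc,
        Real.sqrt_div_self, div_eq_mul_inv]
    simpa only [heq, Real.sqrt_zero] using (tendsto_const_div_atTop_nhds_zero_nat b).sqrt
  simpa [add_div, mul_div_assoc, div_eq_mul_inv c] using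
    ((hlog.const_mul a).add hsqrt).add (hinv.const_mul c)

section Achievability

variable {X Y : Type*} [Fintype X] [Fintype Y]

theorem prodCh_ofReal {w : X → Y → ℝ} (hw : ∀ x, 0 ≤ w x) {n : ℕ} (xs : Fin n → X) :
    prodCh n (fun x y => ENNReal.ofReal (w x y)) xs =
      fun ys => ENNReal.ofReal (piWeight (fun i => w (xs i)) ys) :=
  funext fun _ => (ENNReal.ofReal_prod_of_nonneg fun i _ => hw (xs i) _).symm

theorem exists_isSimulation_piWeight_ge [Nonempty X] {n M : ℕ} (hM : 0 < M) {c : ℝ}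
    (hc : Real.logb 2 M ≤ c) {V : (Fin n → X) → Fin n → Y → ℝ}
    (hV : ∀ xs i, V xs i ∈ stdSimplex ℝ Y) {q : (X → ℕ) → Y → ℝ}
    (hq : ∀ xs : Fin n → X, q (seqType xs) ∈ stdSimplex ℝ Y) :
    ∃ (Q : (Fin n → Y) → ℝ) (N : (Fin n → X) → (Fin n → Y) → ℝ≥0∞), IsSimulation c N ∧
      ∀ xs, piWeight (fun _ => q (seqType xs)) ≤ (numTypes X n : ℝ) • Q ∧
        ∀ ys, ENNReal.ofReal (min (piWeight (V xs) ys) (M * Q ys) / 2) ≤ N xs ys := by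
  have hπ : ∀ xs, piWeight (V xs) ∈ stdSimplex ℝ (Fin n → Y) := fun xs =>
    piWeight_mem_stdSimplex (hV xs)
  obtain ⟨Q, hQ, hqQ⟩ := exists_mem_stdSimplex_forall_le_card_smul
    (Finset.univ_nonempty.image fun xs : Fin n → X => seqType xs)
    (q := fun t => piWeight fun _ : Fin n => q t)
    (Finset.forall_mem_image.2 fun xs _ => piWeight_mem_stdSimplex fun _ => hq xs)
  obtain ⟨N, hN, hNge⟩ := exists_isSimulation_ge hM hc hQ
    (t := fun xs ys => min (piWeight (V xs) ys) (M * Q ys))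
    (fun xs ys => le_min ((hπ xs).1 ys) (mul_nonneg M.cast_nonneg (hQ.1 ys)))
    (fun xs => (Finset.sum_le_sum fun ys _ => min_le_left _ _).trans_eq (hπ xs).2)
    fun xs ys => min_le_right _ _
  exact ⟨Q, N, hN, fun xs =>
    ⟨hqQ _ (Finset.mem_image_of_mem _ (Finset.mem_univ xs)), hNge xs⟩⟩

theorem simD_prodCh_le [Nonempty X] {α δ r C : ℝ} (hα0 : 0 < α) (hα1 : α < 1) (hδ : 0 < δ)
    (hr : 0 ≤ r) {w : X → Y → ℝ} (hw : ∀ x, 0 ≤ w x)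
    (hC : ∀ p ∈ stdSimplex ℝ X, ∃ k ∈ testPairs w δ,
      α / (1 - α) * ∑ x, p x * relEntropy (k.1 x) (w x) +
        max 0 (∑ x, p x * relEntropy (k.1 x) k.2 - r * Real.log 2) ≤ C) {n : ℕ} (hn : n ≠ 0) :
    simD (ENNReal.ofReal α) (prodCh n fun x y => ENNReal.ofReal (w x y)) (n * r) ≤
      (((n * C + (Fintype.card X * Real.log (n + 1) + √(n * (4 / δ ^ 2)) + 2 * Real.log 2)) /
        Real.log 2 : ℝ) : EReal) := by
  choose! k hk hkC using hC
  have hp : ∀ xs : Fin n → X, typeDist n (seqType xs) ∈ stdSimplex ℝ X :=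
    typeDist_seqType_mem_stdSimplex hn
  obtain ⟨M, hM, hMr, hlogM⟩ := exists_nat_logb_le (mul_nonneg n.cast_nonneg hr)
  obtain ⟨Q, N, hN, hQN⟩ := exists_isSimulation_piWeight_ge hM hMr
    (V := fun xs i => (k (typeDist n (seqType xs))).1 (xs i))
    (q := fun t => (k (typeDist n t)).2)
    (fun xs i => ((hk _ (hp xs)).1 (xs i) trivial).1) fun xs => (hk _ (hp xs)).2.1
  have hA : (1 : ℝ) ≤ numTypes X n := Nat.one_le_cast.2 (Finset.univ_nonempty.image _).card_pos
  have hlogA : Real.log (numTypes X n) ≤ Fintype.card X * Real.log (n + 1) := by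
    rw [← Real.log_pow]
    exact Real.log_le_log (one_pos.trans_le hA) (by exact_mod_cast numTypes_le n)
  refine (iInf_le _ ⟨N, hN⟩).trans (iSup_le fun xs => ?_)
  rw [prodCh_ofReal hw]
  refine (renyiD_piWeight_le hα0 hα1 hδ hA (Nat.cast_pos.2 hM) (fun i => hw (xs i))
    (fun i => (hk _ (hp xs)).1 (xs i) trivial) (hk _ (hp xs)).2 (hQN xs).1 (hQN xs).2).trans ?_
  have hxs := hkC _ (hp xs)
  set p := typeDist n (seqType xs)
  rw [EReal.coe_le_coe_iff, Fintype.card_fin,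
    sum_comp_eq_sum_typeDist_mul hn xs fun x => relEntropy ((k p).1 x) (w x),
    sum_comp_eq_sum_typeDist_mul hn xs fun x => relEntropy ((k p).1 x) (k p).2]
  gcongr ?_ / _
  set g := ∑ x, p x * relEntropy ((k p).1 x) (k p).2
  have hmax : max 0 (n * g - Real.log M) ≤ n * max 0 (g - r * Real.log 2) + Real.log 2 := by
    refine max_le (by positivity) ?_
    linarith [mul_le_mul_of_nonneg_left (le_max_right 0 (g - r * Real.log 2))
      (n.cast_nonneg (α := ℝ))]
  linarith [mul_le_mul_of_nonneg_left hxs (n.cast_nonneg (α := ℝ))]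

theorem rateOK_natCast_mul {r : ℝ} (hr : 0 ≤ r) : RateOK r fun n => n * r := by
  refine ⟨fun n => by positivity, limsup_le_of_le (by isBoundedDefault) ?_⟩
  filter_upwards [eventually_ne_atTop 0] with n hn
  rw [mul_div_cancel_left₀ _ (Nat.cast_ne_zero.2 hn)]

theorem esc_le_of_simD_le {α : ℝ≥0∞} {W : X → Y → ℝ≥0∞} {r : ℝ} (hr : 0 ≤ r) {R : ℝ} {f : ℕ → ℝ}
    (hf : Tendsto (fun n => f n / n) atTop (nhds R))
    (h : ∀ n ≠ 0, simD α (prodCh n W) (n * r) ≤ (f n : EReal)) : Esc α W r ≤ (R : EReal) := by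
  refine (iInf_le _ ⟨_, rateOK_natCast_mul hr⟩).trans ?_
  rw [← (continuous_coe_real_ereal.continuousAt.tendsto.comp hf).limsup_eq]
  refine limsup_le_limsup ?_
  filter_upwards [eventually_ne_atTop 0] with n hn
  calc ((1 / n : ℝ) : EReal) * simD α (prodCh n W) (n * r) ≤ ((1 / n : ℝ) : EReal) * f n :=
        mul_le_mul_of_nonneg_left (h n hn) (by positivity)
    _ = ((f n / n : ℝ) : EReal) := by rw [← EReal.coe_mul, one_div_mul_eq_div]

theorem esc_ofReal_le [Nonempty X] [Nonempty Y] {α r R ε : ℝ} (hα0 : 0 < α) (hα1 : α < 1)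
    (hr : 0 ≤ r) (hR : 0 ≤ R) (hε : 0 < ε) {w : X → Y → ℝ} (hw : ∀ x, w x ∈ stdSimplex ℝ Y)
    (hcap : ∀ β, α ≤ β → β ≤ 1 → ((α * (1 - β) / (β * (1 - α)) : ℝ) : EReal) *
      (renyiCap (ENNReal.ofReal β) (fun x y => ENNReal.ofReal (w x y)) - r) ≤ R) :
    Esc (ENNReal.ofReal α) (fun x y => ENNReal.ofReal (w x y)) r ≤
      ((R + ε / Real.log 2 : ℝ) : EReal) := by
  set δ := (1 - Real.exp (-ε)) / Fintype.card Y
  have hδ : 0 < δ := div_pos (sub_pos.2 (Real.exp_lt_one_iff.2 (neg_neg_of_pos hε)))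
    (Nat.cast_pos.2 Fintype.card_pos)
  refine esc_le_of_simD_le hr ?_ fun n hn => simD_prodCh_le hα0 hα1 hδ hr (fun x => (hw x).1)
    (fun p hp => exists_mem_testPairs_add_max_zero_le
      (div_nonneg hα0.le (sub_nonneg.2 hα1.le)) hδ
      (fun s hs => exists_trade_off_of_renyiCap_le hα0 hα1 hw hR hcap hε hs) hp) hn
  have hlim := ((tendsto_overhead_div_atTop (Fintype.card X) (4 / δ ^ 2) (2 * Real.log 2)).const_add
    (R * Real.log 2 + ε)).div_const (Real.log 2)
  rw [add_zero, add_div, mul_div_cancel_right₀ _ (Real.log_pos one_lt_two).ne'] at hlim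
  refine hlim.congr' ?_
  filter_upwards [eventually_ne_atTop 0] with n hn
  field_simp

theorem IsChannel.exists_eq_ofReal {W : X → Y → ℝ≥0∞} (hW : IsChannel W) :
    ∃ w : X → Y → ℝ, (∀ x, w x ∈ stdSimplex ℝ Y) ∧ W = fun x y => ENNReal.ofReal (w x y) := by
  choose w hw hWw using fun x => IsDist.exists_eq_ofReal (hW x)
  exact ⟨w, hw, funext hWw⟩

end Achievability

/-- **Achievability of the strong converse exponent for `α ∈ (0,1)`** (Theorem 13):
`E_sc^{(α)}(W,r) ≤ max_{α ≤ β ≤ 1} (α(1-β))/(β(1-α)) (I_β(W) - r)`. -/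
theorem strong_converse_exponent_achievability_lt_one
    {X Y : Type*} [Fintype X] [Fintype Y] [Nonempty X] [Nonempty Y]
    (W : X → Y → ℝ≥0∞) (hW : IsChannel W)
    (α : ℝ) (hα0 : 0 < α) (hα1 : α < 1) (r : ℝ) (hr : 0 ≤ r) :
    Esc (ENNReal.ofReal α) W r ≤
      ⨆ β : {β : ℝ // α ≤ β ∧ β ≤ 1},
        (((α * (1 - β.1)) / (β.1 * (1 - α)) : ℝ) : EReal) *
          (renyiCap (ENNReal.ofReal β.1) W - (r : EReal)) := by
  obtain ⟨w, hw, rfl⟩ := hW.exists_eq_ofReal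
  refine EReal.le_of_forall_lt_iff_le.1 fun z hz => ?_
  obtain ⟨R, hsupR, hRz⟩ := EReal.lt_iff_exists_real_btwn.1 hz
  have hcap := fun β hαβ hβ1 => (iSup_le_iff.1 hsupR.le) ⟨β, hαβ, hβ1⟩
  have hR : 0 ≤ R := by simpa using hcap 1 hα1.le le_rfl
  have hlog2 : 0 < Real.log 2 := Real.log_pos one_lt_two
  have hε : 0 < (z - R) * Real.log 2 := mul_pos (sub_pos.2 (EReal.coe_lt_coe_iff.1 hRz)) hlog2
  refine (esc_ofReal_le hα0 hα1 hr hR hε hw hcap).trans_eq ?_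
  rw [mul_div_cancel_right₀ _ hlog2.ne', add_sub_cancel]

end RST
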